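/- arXiv:1608.07350 — 7 statements merged into one kernel-verified Lean document; each statement's English description precedes it below -/
import Mathlib

section
/- Let r ∈ ℤ and let h satisfy 1 ≤ h ≤ n. Then E_h(M_L^r) ≠ {0}; that is, there exists α ∈ M_L^r with E_h(α) ≠ 0. -/
/-!
Let `E` be an algebraic closure of `K`. By Dedekind's independence of characters, the vectors
`(σ α)_σ`, for `α ∈ L`, span `E ^ n` over `E`; as `K` is infinite, a polynomial that vanishes on
all of them is zero, that is, the embeddings `σ` are algebraically independent over `E` as functions
on `L`. In particular the polynomial `e_h` does not vanish at all of these vectors, so `E_h(α) ≠ 0`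
for some `α ∈ L`. Finally `E_h (c α) = c ^ h E_h(α)` for `c ∈ K`, and `α` can be moved into any
nonzero fractional ideal by a nonzero scalar, because a `K`-multiple of any element of `L` is
integral over the valuation ring of `K`.
-/

open scoped Classical

/-- `Ecoef K L h α` is `E_h(α) = e_h(σ₁(α),…,σₙ(α))`, characterized by the fact that
`(-1)^h * E_h(α)` is the coefficient of `X^(n-h)` in the characteristic polynomial of
multiplication by `α` on `L` as a `K`-vector space. -/
noncomputable def Ecoef (K L : Type) [Field K] [Field L] [Algebra K L]
    [FiniteDimensional K L] (h : ℕ) (α : L) : K :=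
  (-1) ^ h * ((LinearMap.mulLeft K α).charpoly.coeff (Module.finrank K L - h))

section Polynomials

theorem eq_zero_of_forall_eval_eq_zero_of_span_eq_top {K E σ : Type*} [Field K] [Infinite K]
    [Field E] [Algebra K E] {V : Submodule K (σ → E)}
    (hV : Submodule.span E (V : Set (σ → E)) = ⊤) {P : MvPolynomial σ E}
    (hP : ∀ x ∈ V, P.eval x = 0) : P = 0 := by
  have : Infinite E := .of_injective _ (algebraMap K E).injective
  refine MvPolynomial.funext fun y => ?_
  obtain ⟨m, t, g, rfl⟩ := Submodule.mem_span_set'.1 (hV ▸ Submodule.mem_top (x := y))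
  let z (i : Fin m) : σ → E := g i
  let Q : MvPolynomial (Fin m) E :=
    MvPolynomial.bind₁ (fun s => ∑ i, MvPolynomial.X i * MvPolynomial.C (z i s)) P
  have eval_Q (x : Fin m → E) : Q.eval x = P.eval (∑ i, x i • z i) := by
    simp only [Q, MvPolynomial.eval, MvPolynomial.eval₂Hom_bind₁]
    congr! with s
    simp
  -- `∑ i, c i • z i ∈ V` for `c i ∈ K`, so `Q` vanishes on `K ^ m`.
  have hQ : Q = 0 := by
    refine MvPolynomial.funext_set (fun _ => Set.range (algebraMap K E))
      (fun _ => Set.infinite_range_of_injective (algebraMap K E).injective) fun x hx => ?_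
    choose c hc using fun i => hx i trivial
    have hmem : ∑ i, x i • z i ∈ V := by
      simp only [← hc, algebraMap_smul]
      exact V.sum_mem fun i _ => V.smul_mem (c i) (g i).2
    rw [eval_Q, hP _ hmem, map_zero]
  rw [← eval_Q, hQ, map_zero, map_zero]

theorem mvPolynomial_esymm_ne_zero {σ R : Type*} [Fintype σ] [CommSemiring R] [Nontrivial R]
    {h : ℕ} (hh : h ≤ Fintype.card σ) : MvPolynomial.esymm σ R h ≠ 0 := by
  rw [← MvPolynomial.support_nonempty, MvPolynomial.support_esymm]
  exact (Finset.powersetCard_nonempty.2 hh).image _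

theorem mvPolynomial_aeval_apply {σ ι R A : Type*} [CommSemiring R] [CommSemiring A] [Algebra R A]
    (f : σ → ι → A) (P : MvPolynomial σ R) (i : ι) :
    MvPolynomial.aeval f P i = MvPolynomial.aeval (fun s => f s i) P :=
  MvPolynomial.comp_aeval_apply f (Pi.evalAlgHom R (fun _ => A) i) P

theorem matrix_coeff_charpoly_smul {ι R : Type*} [Fintype ι] [DecidableEq ι] [CommRing R] {h : ℕ}
    (hh : h ≤ Fintype.card ι) (c : R) (A : Matrix ι ι R) :
    (c • A).charpoly.coeff (Fintype.card ι - h) =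
      c ^ h * A.charpoly.coeff (Fintype.card ι - h) := by
  have hminors : ∑ s ∈ Finset.univ.powersetCard h,
      ((c • A).submatrix (Subtype.val : s → ι) Subtype.val).det =
      c ^ h * ∑ s ∈ Finset.univ.powersetCard h,
        (A.submatrix (Subtype.val : s → ι) Subtype.val).det := by
    rw [Finset.mul_sum]
    refine Finset.sum_congr rfl fun s hs => ?_
    rw [Matrix.submatrix_smul, Pi.smul_apply, Pi.smul_apply, Matrix.det_smul, Fintype.card_coe,
      (Finset.mem_powersetCard.1 hs).2]
  rw [Matrix.charpoly_coeff_eq_sum_minors _ _ hh, Matrix.charpoly_coeff_eq_sum_minors _ _ hh,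
    hminors, mul_left_comm]

end Polynomials

section Embeddings

open Polynomial

variable (K L E : Type*) [Field K] [Field L] [Algebra K L] [Field E] [Algebra K E]

theorem span_range_algHom_apply_eq_top [Finite (L →ₐ[K] E)] :
    Submodule.span E (Set.range fun (α : L) (σ : L →ₐ[K] E) => σ α) = ⊤ :=
  span_flip_eq_top_iff_linearIndependent.2
    ((linearIndependent_algHom_toLinearMap K L E).map' (LinearMap.ltoFun K L E E)
      (LinearMap.ker_eq_bot.2 DFunLike.coe_injective))

theorem algebraicIndependent_algHom_coe [Infinite K] [Finite (L →ₐ[K] E)] :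
    AlgebraicIndependent E fun σ : L →ₐ[K] E => (σ : L → E) := by
  refine algebraicIndependent_iff.2 fun P hP => ?_
  refine eq_zero_of_forall_eval_eq_zero_of_span_eq_top
    (V := LinearMap.range (LinearMap.pi fun σ : L →ₐ[K] E => σ.toLinearMap))
    (span_range_algHom_apply_eq_top K L E) ?_
  rintro _ ⟨α, rfl⟩
  exact (mvPolynomial_aeval_apply _ P α).symm.trans (congrFun hP α)

variable {L} [FiniteDimensional K L]

theorem isUnit_embeddingsMatrix (b : Module.Basis (L →ₐ[K] E) K L) :
    IsUnit (Algebra.embeddingsMatrix K E b) := by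
  have hli : LinearIndependent E fun (σ : L →ₐ[K] E) i => σ (b i) :=
    (linearIndependent_algHom_toLinearMap K L E).map' (b.constr E).symm.toLinearMap
      (b.constr E).symm.ker
  exact Matrix.linearIndependent_cols_iff_isUnit.1 hli

theorem transpose_toMatrix_mulLeft_mul_embeddingsMatrix (b : Module.Basis (L →ₐ[K] E) K L)
    (α : L) :
    ((LinearMap.toMatrix b b (LinearMap.mulLeft K α)).map (algebraMap K E)).transpose *
        Algebra.embeddingsMatrix K E b =
      Algebra.embeddingsMatrix K E b * Matrix.diagonal fun σ : L →ₐ[K] E => σ α := by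
  ext i σ
  have hσ : σ (∑ j, b.repr (α * b i) j • b j) = σ (α * b i) := congrArg σ (b.sum_repr (α * b i))
  rw [Matrix.mul_diagonal, Matrix.mul_apply]
  simpa [LinearMap.toMatrix_apply, Algebra.smul_def, mul_comm, -Algebra.toMatrix_lmul_eq] using hσ

theorem map_charpoly_mulLeft [Algebra.IsSeparable K L] [IsAlgClosed E] (α : L) :
    (LinearMap.mulLeft K α).charpoly.map (algebraMap K E) = ∏ σ : L →ₐ[K] E, (X - C (σ α)) := by
  let b : Module.Basis (L →ₐ[K] E) K L :=
    (Module.finBasisOfFinrankEq K L (AlgHom.card K L E).symm).reindex (Fintype.equivFin _).symm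
  let A := (LinearMap.toMatrix b b (LinearMap.mulLeft K α)).map (algebraMap K E)
  obtain ⟨U, hU⟩ := isUnit_embeddingsMatrix K E b
  have hAU : A.transpose * U = U * Matrix.diagonal fun σ : L →ₐ[K] E => σ α :=
    hU ▸ transpose_toMatrix_mulLeft_mul_embeddingsMatrix K E b α
  calc (LinearMap.mulLeft K α).charpoly.map (algebraMap K E)
      = A.transpose.charpoly := by
        rw [Matrix.charpoly_transpose, ← LinearMap.charpoly_toMatrix _ b, ← Matrix.charpoly_map]
    _ = (Matrix.diagonal fun σ : L →ₐ[K] E => σ α).charpoly := by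
        rw [← Matrix.charpoly_units_conj' U, mul_assoc, hAU, ← Matrix.coe_units_inv,
          U.inv_mul_cancel_left]
    _ = ∏ σ : L →ₐ[K] E, (X - C (σ α)) := Matrix.charpoly_diagonal _

end Embeddings

section ElementarySymmetric

variable {K L : Type} [Field K] [Field L] [Algebra K L] [FiniteDimensional K L] {h : ℕ}

theorem Ecoef_smul (hh : h ≤ Module.finrank K L) (c : K) (α : L) :
    Ecoef K L h (c • α) = c ^ h * Ecoef K L h α := by
  let b := Module.finBasis K L
  have hcoeff := matrix_coeff_charpoly_smul (by simpa using hh) c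
    (LinearMap.toMatrix b b (LinearMap.mulLeft K α))
  rw [← map_smul, LinearMap.charpoly_toMatrix, LinearMap.charpoly_toMatrix,
    Fintype.card_fin] at hcoeff
  have hmul : LinearMap.mulLeft K (c • α) = c • LinearMap.mulLeft K α :=
    map_smul (LinearMap.mul K L) c α
  rw [Ecoef, Ecoef, hmul, hcoeff, mul_left_comm]

variable [Algebra.IsSeparable K L]

theorem algebraMap_Ecoef (E : Type*) [Field E] [Algebra K E] [IsAlgClosed E]
    (hh : h ≤ Module.finrank K L) (α : L) :
    algebraMap K E (Ecoef K L h α) =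
      (Finset.univ.val.map fun σ : L →ₐ[K] E => σ α).esymm h := by
  let S := Finset.univ.val.map fun σ : L →ₐ[K] E => σ α
  have hcard : S.card = Module.finrank K L := by simp [S]
  have hcharpoly : (LinearMap.mulLeft K α).charpoly.map (algebraMap K E) =
      (S.map fun x => Polynomial.X - Polynomial.C x).prod := by
    rw [map_charpoly_mulLeft, Multiset.map_map]
    rfl
  have hcoeff := Multiset.prod_X_sub_C_coeff S (hcard ▸ Nat.sub_le (Module.finrank K L) h)
  rw [hcard, Nat.sub_sub_self hh] at hcoeff
  rw [Ecoef, map_mul, ← Polynomial.coeff_map, hcharpoly, hcoeff, ← mul_assoc, map_pow, map_neg,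
    map_one, ← mul_pow, neg_one_mul, neg_neg, one_pow, one_mul]

theorem exists_Ecoef_ne_zero [Infinite K] (hh : h ≤ Module.finrank K L) :
    ∃ α : L, Ecoef K L h α ≠ 0 := by
  by_contra! hE
  let E := AlgebraicClosure K
  refine mvPolynomial_esymm_ne_zero (R := E) (hh.trans_eq (AlgHom.card K L E).symm)
    (algebraicIndependent_iff.1 (algebraicIndependent_algHom_coe K L E) _ (funext fun α => ?_))
  rw [mvPolynomial_aeval_apply, MvPolynomial.aeval_esymm_eq_multiset_esymm,
    ← algebraMap_Ecoef E hh, hE, map_zero, Pi.zero_apply]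

end ElementarySymmetric

section Valuation

variable (K : Type*) {L Γ₀ : Type*} [Field K] [Field L] [Algebra K L] [Algebra.IsAlgebraic K L]
  [LinearOrderedCommGroupWithZero Γ₀] (v : Valuation L Γ₀)

theorem exists_smul_valuation_le_one (x : L) : ∃ c : K, c ≠ 0 ∧ v (c • x) ≤ 1 := by
  let w := v.comap (algebraMap K L)
  have : w.HasExtension v := ⟨.refl⟩
  have : Algebra.IsAlgebraic w.valuationSubring L :=
    (IsFractionRing.comap_isAlgebraic_iff (K := K)).2 inferInstance
  obtain ⟨c, hc, hcx⟩ :=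
    (Algebra.IsAlgebraic.isAlgebraic (R := w.valuationSubring) x).exists_integral_multiple
  exact ⟨c, by simpa using hc, (Valuation.integer.integers v).mem_of_integral
    (hcx.tower_top (A := v.valuationSubring))⟩

theorem exists_smul_valuation_le (x : L) {a : L} (ha : a ≠ 0) :
    ∃ c : K, c ≠ 0 ∧ v (c • x) ≤ v a := by
  obtain ⟨c, hc, hcx⟩ := exists_smul_valuation_le_one K v (x / a)
  refine ⟨c, hc, ?_⟩
  rwa [← smul_div_assoc, map_div₀, div_le_one₀ (v.pos_iff.2 ha)] at hcx

end Valuation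

section AdditiveValuation

open WithZero

variable {F Γ : Type*} [Field F] [AddCommGroup Γ] [LinearOrder Γ] [IsOrderedAddMonoid Γ]
  (v : F → Γ) (hmul : ∀ x y, x ≠ 0 → y ≠ 0 → v (x * y) = v x + v y)
  (hadd : ∀ x y, x ≠ 0 → y ≠ 0 → x + y ≠ 0 → min (v x) (v y) ≤ v (x + y))

/-- The multiplicative valuation `x ↦ exp (-v x)` attached to an additive valuation `v` given by
its values on nonzero elements. The valuation of `0` is set to `0`, whatever the junk value
`v 0`. -/
noncomputable def valuationOfOrd : Valuation F Γᵐ⁰ where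
  toFun x := if x = 0 then 0 else exp (-v x)
  map_zero' := if_pos rfl
  map_one' := by
    have hone : v 1 = 0 := by simpa using hmul 1 1 one_ne_zero one_ne_zero
    simp [hone]
  map_mul' x y := by
    rcases eq_or_ne x 0 with rfl | hx
    · simp
    rcases eq_or_ne y 0 with rfl | hy
    · simp
    simp [hx, hy, hmul, mul_comm]
  map_add_le_max' x y := by
    rcases eq_or_ne x 0 with rfl | hx
    · simp
    rcases eq_or_ne y 0 with rfl | hy
    · simp
    rcases eq_or_ne (x + y) 0 with hxy | hxy
    · simp [hxy]
    simpa only [hx, hy, hxy, if_false, le_max_iff, exp_le_exp, neg_le_neg_iff, min_le_iff]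
      using hadd x y hx hy hxy

theorem valuationOfOrd_le_iff {x a : F} (ha : a ≠ 0) :
    valuationOfOrd v hmul hadd x ≤ valuationOfOrd v hmul hadd a ↔ x = 0 ∨ v a ≤ v x := by
  rcases eq_or_ne x 0 with rfl | hx
  · simp
  · simp [valuationOfOrd, hx, ha, -exp_neg]

end AdditiveValuation

theorem stmt1_general (K L : Type) {Γ₀ : Type*} [Field K] [Infinite K] [Field L] [Algebra K L]
    [FiniteDimensional K L] [Algebra.IsSeparable K L] [LinearOrderedCommGroupWithZero Γ₀]
    (v : Valuation L Γ₀) {a : L} (ha : a ≠ 0) {h : ℕ} (hh : h ≤ Module.finrank K L) :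
    ∃ α : L, v α ≤ v a ∧ Ecoef K L h α ≠ 0 := by
  obtain ⟨α, hα⟩ := exists_Ecoef_ne_zero hh
  obtain ⟨c, hc, hcα⟩ := exists_smul_valuation_le K v α ha
  exact ⟨c • α, hcα, Ecoef_smul hh c α ▸ mul_ne_zero (pow_ne_zero h hc) hα⟩

theorem stmt1
    (p : ℕ) (hp : p.Prime)
    (K L : Type) [Field K] [Field L] [Algebra K L] [FiniteDimensional K L]
    [Algebra.IsSeparable K L]
    (n : ℕ) (hn : 0 < n) (hrank : Module.finrank K L = n)
    (vK : K → ℤ) (vL : L → ℤ)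
    (hvKmul : ∀ x y : K, x ≠ 0 → y ≠ 0 → vK (x * y) = vK x + vK y)
    (hvKadd : ∀ x y : K, x ≠ 0 → y ≠ 0 → x + y ≠ 0 → min (vK x) (vK y) ≤ vK (x + y))
    (hvKsurj : ∀ m : ℤ, ∃ x : K, x ≠ 0 ∧ vK x = m)
    (hvLmul : ∀ x y : L, x ≠ 0 → y ≠ 0 → vL (x * y) = vL x + vL y)
    (hvLadd : ∀ x y : L, x ≠ 0 → y ≠ 0 → x + y ≠ 0 → min (vL x) (vL y) ≤ vL (x + y))
    (hvLsurj : ∀ m : ℤ, ∃ x : L, x ≠ 0 ∧ vL x = m)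
    (hext : ∀ x : K, x ≠ 0 → vL (algebraMap K L x) = (n : ℤ) * vK x)
    (hcomplete : ∀ s : ℕ → K,
      (∀ m : ℤ, ∃ N : ℕ, ∀ i, N ≤ i → ∀ j, N ≤ j → s i - s j = 0 ∨ m ≤ vK (s i - s j)) →
      ∃ x : K, ∀ m : ℤ, ∃ N : ℕ, ∀ i, N ≤ i → s i - x = 0 ∨ m ≤ vK (s i - x))
    (hreschar : (p : K) = 0 ∨ 1 ≤ vK (p : K))
    (hresperf : ∀ x : K, (x = 0 ∨ 0 ≤ vK x) →
      ∃ y : K, (y = 0 ∨ 0 ≤ vK y) ∧ (x - y ^ p = 0 ∨ 1 ≤ vK (x - y ^ p)))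
    (r : ℤ) (h : ℕ) (h1 : 1 ≤ h) (h2 : h ≤ n) :
    ∃ α : L, (α = 0 ∨ r ≤ vL α) ∧ Ecoef K L h α ≠ 0 := by
  have : Infinite K := .of_surjective vK fun m => (hvKsurj m).imp fun _ => And.right
  obtain ⟨a, ha, rfl⟩ := hvLsurj r
  obtain ⟨α, hα, hE⟩ := stmt1_general K L (valuationOfOrd vL hvLmul hvLadd) ha (hrank ▸ h2)
  exact ⟨α, (valuationOfOrd_le_iff vL hvLmul hvLadd ha).1 hα, hE⟩
end

section
/- Let b, c, m, w be positive integers such that mb + c = w and b ≠ c. Let μ be the partition of w consisting of m copies of b and 1 copy of c, and let λ be the partition of w consisting of the single part w. Then for every n ≥ w, the coefficient d_{λμ} of the monomial X_w in ψ_μ ∈ ℤ[X_1,…,X_n] equals (−1)^{w+m+1}·w. -/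
/-!
Set `e_w = ε` with `ε² = 0` and all other `e_k = 0`. On symmetric polynomials this is a ring
homomorphism to the dual numbers, and it sends `ψ(e_1, …, e_n)` to an element whose `ε`-part is the
coefficient of `X_w` in `ψ`. By Newton's identities it kills `p_k` for `0 < k < w` and sends `p_w`
to `(-1)^(w+1) w ε`.

For `b ≠ c`, the monomial symmetric polynomial of `(b^m, c)` is
`A(m, c) = ∑ i, X_i^c e_m(X_j^b : j ≠ i)`. Expanding a product gives
`p_c · e_{m+1}(X_j^b) = A(m+1, c) + A(m, c+b)`, so when `(m+1) b + c = w` the images of `A(m+1, c)`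
and `A(m, c+b)` are opposite. After `m` such sign changes one arrives at `A(0, w) = p_w`.
-/

open scoped Classical

/-- The monomial symmetric polynomial in `n` variables associated to the partition
(multiset of positive integers) `μ`: the sum of all distinct monomials whose multiset of
nonzero exponents equals `μ`. -/
noncomputable def msymmM (n : ℕ) (R : Type) [CommSemiring R] (μ : Multiset ℕ) :
    MvPolynomial (Fin n) R :=
  ∑ d : Fin n → Fin (μ.sum + 1),
    if (Multiset.map (fun i => (d i : ℕ)) Finset.univ.val).filter (· ≠ 0) = μ then
      MvPolynomial.monomial (Finsupp.equivFunOnFinite.symm fun i => (d i : ℕ)) (1 : R)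
    else 0

section

open Finset MvPolynomial DualNumber

section HookSum

theorem isSymmetric_expand {σ R : Type*} [CommSemiring R] (b : ℕ) {p : MvPolynomial σ R}
    (hp : p.IsSymmetric) : (expand b p).IsSymmetric := fun e => by
  rw [rename_expand, hp e]

theorem expand_esymm (σ R : Type*) [Fintype σ] [CommSemiring R] (b m : ℕ) :
    expand b (esymm σ R m) = ∑ S ∈ powersetCard m univ, ∏ j ∈ S, X j ^ b := by
  simp only [esymm, map_sum, map_prod, expand_X]

variable (σ R : Type*) [Fintype σ] [DecidableEq σ]

/-- The sum `∑ i, X_i ^ c * e_m(X_j ^ b : j ≠ i)`, indexed by the pairs `(i, S)` where `S` is the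
`m`-element set chosen in `e_m`. For distinct positive `b`, `c` it is the monomial symmetric
polynomial of the partition with `m` parts `b` and one part `c`; unlike the latter, it satisfies
the recursion `psum_mul_expand_esymm` for all `b`, `c`. -/
noncomputable def hookSum [CommSemiring R] (b m c : ℕ) : MvPolynomial σ R :=
  ∑ p : σ × Finset σ with p.1 ∉ p.2 ∧ #p.2 = m, X p.1 ^ c * ∏ j ∈ p.2, X j ^ b

theorem hookSum_zero [CommSemiring R] (b c : ℕ) : hookSum σ R b 0 c = psum σ R c := by
  refine sum_nbij' Prod.fst (fun i => (i, ∅)) ?_ ?_ ?_ ?_ ?_ <;>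
    simp +contextual [Prod.ext_iff, eq_comm]

theorem sum_pairs_mem_eq_hookSum [CommSemiring R] (b m c : ℕ) :
    ∑ p : σ × Finset σ with p.1 ∈ p.2 ∧ #p.2 = m + 1,
      (X p.1 ^ c * ∏ j ∈ p.2, X j ^ b : MvPolynomial σ R) = hookSum σ R b m (c + b) := by
  have split_factor (p : σ × Finset σ) (hp : p.1 ∈ p.2) :
      (X p.1 ^ c * ∏ j ∈ p.2, X j ^ b : MvPolynomial σ R) =
        X p.1 ^ (c + b) * ∏ j ∈ p.2.erase p.1, X j ^ b := by
    rw [← mul_prod_erase p.2 _ hp, pow_add, mul_assoc]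
  refine sum_nbij' (fun p => (p.1, p.2.erase p.1)) (fun p => (p.1, insert p.1 p.2))
    ?_ ?_ ?_ ?_ fun p hp => split_factor p (mem_filter.1 hp).2.1 <;>
    simp +contextual [card_erase_of_mem, insert_erase]

theorem psum_mul_expand_esymm [CommSemiring R] (b m c : ℕ) :
    psum σ R c * expand b (esymm σ R (m + 1)) =
      hookSum σ R b (m + 1) c + hookSum σ R b m (c + b) := by
  have pairs_eq : univ ×ˢ powersetCard (m + 1) univ =
      ({p | #p.2 = m + 1} : Finset (σ × Finset σ)) := by
    ext p
    simp
  rw [← sum_pairs_mem_eq_hookSum, hookSum, psum, expand_esymm, sum_mul_sum, ← sum_product',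
    pairs_eq, ← sum_filter_not_add_sum_filter _ fun p : σ × Finset σ => p.1 ∈ p.2]
  simp only [filter_filter, and_comm]

theorem hookSum_isSymmetric [CommRing R] (b m c : ℕ) : (hookSum σ R b m c).IsSymmetric := by
  induction m generalizing c with
  | zero => exact hookSum_zero σ R b c ▸ psum_isSymmetric σ R c
  | succ m ih =>
    rw [eq_sub_of_add_eq (psum_mul_expand_esymm σ R b m c).symm]
    exact ((psum_isSymmetric σ R c).mul
      (isSymmetric_expand b (esymm_isSymmetric σ R (m + 1)))).sub (ih (c + b))

end HookSum

section HookExponent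

variable {σ : Type*}

theorem count_filter_ne_zero_map [Fintype σ] (d : σ → ℕ) {v : ℕ} (hv : v ≠ 0) :
    ((univ.val.map d).filter (· ≠ 0)).count v = #{j | d j = v} := by
  rw [Multiset.count_filter_of_pos (p := (· ≠ 0)) hv, Multiset.count_map, card_def, filter_val]
  simp only [eq_comm]

theorem filter_ne_zero_map_eq_replicate_add_singleton_iff [Fintype σ] {b c : ℕ}
    (hb : 0 < b) (hc : 0 < c) (hbc : b ≠ c) (m : ℕ) (d : σ → ℕ) :
    (univ.val.map d).filter (· ≠ 0) = Multiset.replicate m b + {c} ↔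
      #{j | d j = b} = m ∧ #{j | d j = c} = 1 ∧ ∀ j, d j = 0 ∨ d j = b ∨ d j = c := by
  constructor
  · intro h
    rw [← count_filter_ne_zero_map d hb.ne', ← count_filter_ne_zero_map d hc.ne', h]
    refine ⟨?_, ?_, fun j => or_iff_not_imp_left.2 fun hj => ?_⟩
    · simp [hbc]
    · simp [Multiset.count_replicate, hbc]
    · have hmem : d j ∈ (univ.val.map d).filter (· ≠ 0) :=
        Multiset.mem_filter.2 ⟨Multiset.mem_map_of_mem d (mem_univ j), hj⟩
      rw [h, Multiset.mem_add, Multiset.mem_singleton] at hmem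
      exact hmem.imp_left Multiset.eq_of_mem_replicate
  · rintro ⟨hm, hone, hd⟩
    ext v
    obtain rfl | hv := eq_or_ne v 0
    · simp [Multiset.count_replicate, hb.ne', hc.ne]
    rw [count_filter_ne_zero_map d hv]
    by_cases hvb : v = b
    · simp [hvb, hm, hbc]
    by_cases hvc : v = c
    · simp [hvc, hone, Multiset.count_replicate, hbc]
    · have : ({j | d j = v} : Finset σ) = ∅ := filter_eq_empty_iff.2 fun j _ => by grind
      simp [this, Multiset.count_replicate, hvc, Ne.symm hvb]

variable [DecidableEq σ]

/-- The exponent vector of the monomial `X_i ^ c * ∏ j ∈ S, X_j ^ b` of `hookSum`, for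
`p = (i, S)` with `i ∉ S`. -/
def hookExponent (b c : ℕ) (p : σ × Finset σ) (j : σ) : ℕ :=
  if j = p.1 then c else if j ∈ p.2 then b else 0

theorem hookExponent_eq_left_iff {b c : ℕ} (hb : 0 < b) (hbc : b ≠ c) {p : σ × Finset σ}
    (hp : p.1 ∉ p.2) {j : σ} : hookExponent b c p j = b ↔ j ∈ p.2 := by
  grind [hookExponent]

theorem hookExponent_eq_right_iff {b c : ℕ} (hc : 0 < c) (hbc : b ≠ c) {p : σ × Finset σ}
    {j : σ} : hookExponent b c p j = c ↔ j = p.1 := by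
  grind [hookExponent]

theorem hookExponent_injOn {b c : ℕ} (hb : 0 < b) (hc : 0 < c) (hbc : b ≠ c) :
    Set.InjOn (hookExponent b c) {p : σ × Finset σ | p.1 ∉ p.2} := by
  intro p hp q hq h
  refine Prod.ext ?_ (Finset.ext fun j => ?_)
  · rw [← hookExponent_eq_right_iff hc hbc (p := q), ← h, hookExponent_eq_right_iff hc hbc]
  · rw [← hookExponent_eq_left_iff hb hbc hp, h, hookExponent_eq_left_iff hb hbc hq]

theorem exists_hookExponent_eq_iff [Fintype σ] {b c : ℕ} (hb : 0 < b) (hc : 0 < c) (hbc : b ≠ c)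
    (m : ℕ) (d : σ → ℕ) :
    (∃ p : σ × Finset σ, (p.1 ∉ p.2 ∧ #p.2 = m) ∧ hookExponent b c p = d) ↔
      (univ.val.map d).filter (· ≠ 0) = Multiset.replicate m b + {c} := by
  rw [filter_ne_zero_map_eq_replicate_add_singleton_iff hb hc hbc]
  constructor
  · rintro ⟨p, ⟨hp, rfl⟩, rfl⟩
    refine ⟨?_, ?_, fun j => by grind [hookExponent]⟩
    · simp [hookExponent_eq_left_iff hb hbc hp]
    · simp [hookExponent_eq_right_iff hc hbc, filter_eq']
  · rintro ⟨hm, hone, hd⟩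
    obtain ⟨i, hi⟩ := card_eq_one.1 hone
    have hi (j : σ) : d j = c ↔ j = i := by simpa using congrArg (j ∈ ·) hi
    refine ⟨(i, ({j | d j = b} : Finset σ)), ⟨?_, hm⟩, funext fun j => ?_⟩
    · simpa [(hi i).2 rfl] using hbc.symm
    · simp only [hookExponent, mem_filter_univ, ← hi j]
      grind

theorem monomial_hookExponent [Finite σ] {R : Type*} [CommSemiring R] (b c : ℕ)
    {p : σ × Finset σ} (hp : p.1 ∉ p.2) :
    monomial (Finsupp.equivFunOnFinite.symm (hookExponent b c p)) (1 : R) =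
      X p.1 ^ c * ∏ j ∈ p.2, X j ^ b := by
  have support_subset : (Finsupp.equivFunOnFinite.symm (hookExponent b c p)).support ⊆
      insert p.1 p.2 := fun j hj => by
    rw [Finsupp.mem_support_iff, Finsupp.equivFunOnFinite_symm_apply_apply] at hj
    grind [hookExponent]
  rw [monomial_eq, C_1, one_mul,
    Finsupp.prod_of_support_subset _ support_subset _ fun _ _ => pow_zero _, prod_insert hp]
  congr 1
  · simp [hookExponent]
  · refine prod_congr rfl fun j hj => ?_
    simp [hookExponent, hj, ne_of_mem_of_not_mem hj hp]

end HookExponent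

theorem msymmM_eq_sum_monomial {n : ℕ} (R : Type) [CommSemiring R] {μ : Multiset ℕ}
    {T : Finset (Fin n → ℕ)} (hT : ∀ d, d ∈ T ↔ (univ.val.map d).filter (· ≠ 0) = μ) :
    msymmM n R μ = ∑ d ∈ T, monomial (Finsupp.equivFunOnFinite.symm d) 1 := by
  have lt_sum_add_one {d : Fin n → ℕ} (hd : d ∈ T) (j : Fin n) : d j < μ.sum + 1 := by
    obtain h0 | h0 := eq_or_ne (d j) 0
    · omega
    · have hmem : d j ∈ μ := (hT d).1 hd ▸
        Multiset.mem_filter.2 ⟨Multiset.mem_map_of_mem d (mem_univ j), h0⟩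
      exact Nat.lt_succ_of_le (Multiset.le_sum_of_mem hmem)
  rw [msymmM, ← sum_filter]
  refine sum_bij (fun d _ j => (d j : ℕ)) ?_ ?_ ?_ fun _ _ => rfl
  · exact fun d hd => (hT _).2 (mem_filter.1 hd).2
  · exact fun d _ d' _ h => funext fun j => Fin.ext (congrFun h j)
  · exact fun d hd => ⟨fun j => ⟨d j, lt_sum_add_one hd j⟩,
      mem_filter.2 ⟨mem_univ _, (hT d).1 hd⟩, rfl⟩

theorem msymmM_eq_hookSum (n : ℕ) (R : Type) [CommSemiring R] {b c : ℕ} (m : ℕ) (hb : 0 < b)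
    (hc : 0 < c) (hbc : b ≠ c) :
    msymmM n R (Multiset.replicate m b + {c}) = hookSum (Fin n) R b m c := by
  rw [msymmM_eq_sum_monomial R (T := image (hookExponent b c) {p | p.1 ∉ p.2 ∧ #p.2 = m}),
    sum_image, hookSum]
  · exact sum_congr rfl fun p hp => monomial_hookExponent b c (mem_filter.1 hp).2.1
  · exact (hookExponent_injOn hb hc hbc).mono fun p hp => (mem_filter.1 hp).2.1
  · intro d
    simpa using exists_hookExponent_eq_iff hb hc hbc m d

section EsymmSpec

theorem fst_aeval_single_eps {τ R : Type*} [CommSemiring R] [DecidableEq τ] (i : τ)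
    (p : MvPolynomial τ R) :
    (aeval (Pi.single i ε : τ → R[ε]) p).fst = constantCoeff p := by
  induction p using MvPolynomial.induction_on with
  | C a => simp [TrivSqZeroExt.algebraMap_eq_inl]
  | add p q hp hq => simp [hp, hq]
  | mul_X p j hp =>
    obtain rfl | hj := eq_or_ne j i
    · simp
    · simp [hj]

theorem snd_aeval_single_eps {τ R : Type*} [CommSemiring R] [DecidableEq τ] (i : τ)
    (p : MvPolynomial τ R) :
    (aeval (Pi.single i ε : τ → R[ε]) p).snd = p.coeff (Finsupp.single i 1) := by
  induction p using MvPolynomial.induction_on with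
  | C a => simp [TrivSqZeroExt.algebraMap_eq_inl, coeff_C, eq_comm]
  | add p q hp hq => simp [hp, hq]
  | mul_X p j hp =>
    obtain rfl | hj := eq_or_ne j i
    · simp [fst_aeval_single_eps, coeff_mul_X', constantCoeff_eq]
    · simp [hj, coeff_mul_X']

variable {σ R : Type*} [Fintype σ] [CommRing R] {n : ℕ} (hn : Fintype.card σ = n) (i : Fin n)

/-- The specialization of symmetric polynomials at `e_{i+1} = ε` and `e_{k+1} = 0` for `k ≠ i`; its
`ε`-part is the coefficient of the monomial `e_{i+1}`. As in `esymmAlgEquiv`, the index `k : Fin n`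
stands for `e_{k+1}`. -/
noncomputable def esymmSpec : symmetricSubalgebra σ R →ₐ[R] R[ε] :=
  (aeval (Pi.single i ε)).comp (esymmAlgEquiv σ R hn).symm.toAlgHom

theorem esymmSpec_eq_aeval {p : symmetricSubalgebra σ R} {ψ : MvPolynomial (Fin n) R}
    (hψ : aeval (fun k : Fin n => esymm σ R (k + 1)) ψ = p) :
    esymmSpec hn i p = aeval (Pi.single i ε) ψ := by
  have hp : p = esymmAlgEquiv σ R hn ψ := Subtype.ext (hψ.symm.trans (esymmAlgHom_apply ψ).symm)
  subst hp
  exact congrArg (aeval _) ((esymmAlgEquiv σ R hn).symm_apply_apply ψ)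

theorem esymmSpec_esymm_succ (k : Fin n) :
    esymmSpec hn i ⟨esymm σ R (k + 1), esymm_isSymmetric σ R _⟩ =
      Pi.single (M := fun _ => R[ε]) i ε k := by
  rw [esymmSpec_eq_aeval hn i (ψ := X k) (aeval_X _ k), aeval_X]

theorem esymmSpec_esymm_of_lt {k : ℕ} (hk : 0 < k) (hki : k < i + 1) :
    esymmSpec hn i ⟨esymm σ R k, esymm_isSymmetric σ R k⟩ = 0 := by
  obtain ⟨k, rfl⟩ := Nat.exists_eq_add_one.2 hk
  have hki : k < i := Nat.lt_of_succ_lt_succ hki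
  rw [esymmSpec_esymm_succ hn i ⟨k, hki.trans i.isLt⟩, Pi.single_eq_of_ne (Fin.ne_of_lt hki)]

theorem esymmSpec_psum {k : ℕ} (hk : 0 < k) (hki : k ≤ i + 1) :
    esymmSpec hn i ⟨psum σ R k, psum_isSymmetric σ R k⟩ =
      (-1) ^ (k + 1) * k * esymmSpec hn i ⟨esymm σ R k, esymm_isSymmetric σ R k⟩ := by
  have newton : (⟨psum σ R k, psum_isSymmetric σ R k⟩ : symmetricSubalgebra σ R) =
      (-1) ^ (k + 1) * k * ⟨esymm σ R k, esymm_isSymmetric σ R k⟩ -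
      ∑ a ∈ antidiagonal k with a.1 ∈ Set.Ioo 0 k,
        (-1) ^ a.1 * ⟨esymm σ R a.1, esymm_isSymmetric σ R a.1⟩ *
          ⟨psum σ R a.2, psum_isSymmetric σ R a.2⟩ := by
    apply Subtype.ext
    push_cast
    convert psum_eq_mul_esymm_sub_sum σ R k hk
  rw [newton, map_sub, map_sum, sum_eq_zero, sub_zero]
  · simp only [map_mul, map_pow, map_neg, map_one, map_natCast]
  · intro a ha
    obtain ⟨ha0, hak⟩ := (mem_filter.1 ha).2
    rw [map_mul, map_mul, esymmSpec_esymm_of_lt hn i ha0 (hak.trans_le hki), mul_zero, zero_mul]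

theorem esymmSpec_psum_of_lt {k : ℕ} (hk : 0 < k) (hki : k < i + 1) :
    esymmSpec hn i ⟨psum σ R k, psum_isSymmetric σ R k⟩ = 0 := by
  rw [esymmSpec_psum hn i hk hki.le, esymmSpec_esymm_of_lt hn i hk hki, mul_zero]

theorem esymmSpec_psum_succ :
    esymmSpec hn i ⟨psum σ R (i + 1), psum_isSymmetric σ R (i + 1)⟩ =
      (-1) ^ (i + 1 + 1 : ℕ) * ((i + 1 : ℕ) : R[ε]) * ε := by
  rw [esymmSpec_psum hn i i.val.succ_pos le_rfl, esymmSpec_esymm_succ, Pi.single_eq_same]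

theorem esymmSpec_hookSum [DecidableEq σ] {b m c : ℕ} (hb : 0 < b) (hc : 0 < c)
    (h : m * b + c = i + 1) :
    esymmSpec hn i ⟨hookSum σ R b m c, hookSum_isSymmetric σ R b m c⟩ =
      (-1) ^ (i + 1 + m + 1 : ℕ) * ((i + 1 : ℕ) : R[ε]) * ε := by
  induction m generalizing c with
  | zero =>
    obtain rfl : c = i + 1 := by omega
    simp only [hookSum_zero, esymmSpec_psum_succ, add_zero]
  | succ m ih =>
    have hci : c < i + 1 := h ▸ Nat.lt_add_of_pos_left (by positivity)
    have recursion : (⟨hookSum σ R b (m + 1) c, hookSum_isSymmetric σ R b (m + 1) c⟩ :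
        symmetricSubalgebra σ R) =
        ⟨psum σ R c, psum_isSymmetric σ R c⟩ *
            ⟨expand b (esymm σ R (m + 1)), isSymmetric_expand b (esymm_isSymmetric σ R (m + 1))⟩ -
          ⟨hookSum σ R b m (c + b), hookSum_isSymmetric σ R b m (c + b)⟩ :=
      Subtype.ext (eq_sub_of_add_eq (psum_mul_expand_esymm σ R b m c).symm)
    rw [recursion, map_sub, map_mul, esymmSpec_psum_of_lt hn i hc hci, zero_mul,
      ih (Nat.add_pos_left hc b) (by rw [← h]; ring)]
    ring

end EsymmSpec

theorem stmt3_general (R : Type) [CommRing R] {b c m w n : ℕ} (hb : 0 < b) (hc : 0 < c)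
    (hsum : m * b + c = w) (hbc : b ≠ c) (i : Fin n) (hi : (i : ℕ) + 1 = w)
    (ψ : MvPolynomial (Fin n) R)
    (hψ : aeval (fun k : Fin n => esymm (Fin n) R (k + 1)) ψ =
      msymmM n R (Multiset.replicate m b + {c})) :
    ψ.coeff (Finsupp.single i 1) = (-1) ^ (w + m + 1) * (w : R) := by
  rw [msymmM_eq_hookSum n R m hb hc hbc] at hψ
  have spec_eq := esymmSpec_eq_aeval (Fintype.card_fin n) i
    (p := ⟨hookSum (Fin n) R b m c, hookSum_isSymmetric (Fin n) R b m c⟩) hψ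
  rw [esymmSpec_hookSum _ i hb hc (hsum.trans hi.symm), hi] at spec_eq
  rw [← snd_aeval_single_eps, ← spec_eq]
  simp

end

theorem stmt3 (b c m w : ℕ) (hb : 0 < b) (hc : 0 < c) (hm : 0 < m) (hw : 0 < w)
    (hsum : m * b + c = w) (hbc : b ≠ c)
    (n : ℕ) (hn : w ≤ n)
    -- `ψ` is the unique polynomial with `m_μ = ψ(e_1,…,e_n)`, where `μ` consists of
    -- `m` copies of `b` and one copy of `c`.
    (ψ : MvPolynomial (Fin n) ℤ)
    (hψ : MvPolynomial.aeval (fun i : Fin n => MvPolynomial.esymm (Fin n) ℤ ((i : ℕ) + 1)) ψ =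
      msymmM n ℤ (Multiset.replicate m b + {c})) :
    -- the coefficient `d_{λμ}` of the monomial `X_w` in `ψ` equals `(-1)^(w+m+1)·w`
    ψ.coeff (Finsupp.single (⟨w - 1, by omega⟩ : Fin n) 1) = (-1) ^ (w + m + 1) * (w : ℤ) := by
  exact stmt3_general ℤ hb hc hsum hbc _ (Nat.sub_add_cancel hw) ψ hψ
end

section
/- Let a, b, ℓ, m, w be positive integers such that ℓa = mb = w. Let λ be the partition of w consisting of ℓ copies of a and let μ be the partition of w consisting of m copies of b. Set u = gcd(a,b) and v = gcd(ℓ,m). Then for every n ≥ w, the coefficient d_{λμ} of the monomial X_a^ℓ in ψ_μ ∈ ℤ[X_1,…,X_n] equals (−1)^{w−v+ℓ+m}·C(u,v), where C(u,v) is the binomial coefficient. In particular, if u < v then d_{λμ} = 0. -/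
/-!
Substitute for the variables the point `(x, ζ x, …, ζ ^ (a - 1) x, 0, …, 0)`, with `ζ` a primitive
`a`-th root of unity and `x` an indeterminate. Among `e_1, …, e_n` only `e_a = (-1) ^ (a + 1) x ^ a`
survives, so `ψ(e_1, …, e_n)` becomes a polynomial in `x` whose coefficient at `x ^ (l * a)` is the
coefficient of `X_a ^ l` in `ψ`, up to sign.

On the other side, `m_μ` is `e_m` in the `b`-th powers of the variables. With `u = gcd(a, b)` and
`p = a / u`, the `b`-th powers of the coordinates run `u` times through the `p`-th roots of unity
times `x ^ b`, hence `∑ e_k(x_1 ^ b, …) T ^ k = (1 - (-x ^ b T) ^ p) ^ u`. As `m = p * gcd(l, m)`,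
the binomial theorem yields the value of `e_m`. This settles `ℤ`, by way of `ℂ`; any other
coefficient ring follows by base change.
-/

open scoped Classical

open Finset Polynomial

theorem filter_ne_zero_map_eq_replicate_iff {ι : Type*} [Fintype ι] (d : ι → ℕ) (m b : ℕ) :
    (univ.val.map d).filter (· ≠ 0) = Multiset.replicate m b ↔
      #{i | d i ≠ 0} = m ∧ ∀ i, d i ≠ 0 → d i = b := by
  rw [Multiset.filter_map, Multiset.eq_replicate, Multiset.card_map]
  refine and_congr Iff.rfl ?_
  simp

theorem msymmM_replicate (R : Type) [CommSemiring R] (n m : ℕ) {b : ℕ} (hb : 0 < b) :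
    msymmM n R (Multiset.replicate m b) =
      MvPolynomial.expand b (MvPolynomial.esymm (Fin n) R m) := by
  simp only [msymmM, filter_ne_zero_map_eq_replicate_iff, ← sum_filter, MvPolynomial.esymm,
    map_sum, map_prod, MvPolynomial.expand_X]
  have hlt (t : Finset (Fin n)) (ht : #t = m) (i : Fin n) :
      (if i ∈ t then b else 0) < (Multiset.replicate m b).sum + 1 := by
    rw [Multiset.sum_replicate, smul_eq_mul, Nat.lt_succ_iff]
    split_ifs with hi
    · exact Nat.le_mul_of_pos_left b (ht ▸ card_pos.2 ⟨i, hi⟩)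
    · exact Nat.zero_le _
  refine sum_bij' (fun d _ => ({i | (d i : ℕ) ≠ 0} : Finset (Fin n)))
    (fun t ht i => ⟨if i ∈ t then b else 0, hlt t (mem_powersetCard_univ.1 ht) i⟩) ?_ ?_ ?_ ?_ ?_
  · intro d hd
    exact mem_powersetCard_univ.2 (mem_filter.1 hd).2.1
  · intro t ht
    simpa +contextual [hb.ne'] using mem_powersetCard_univ.1 ht
  · intro d hd
    ext i
    simp only [mem_filter_univ]
    split_ifs with hi
    · exact ((mem_filter.1 hd).2.2 i hi).symm
    · exact (not_not.1 hi).symm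
  · intro t _
    simp [hb.ne']
  · intro d hd
    rw [MvPolynomial.monomial_eq, Finsupp.prod_fintype _ _ fun i => pow_zero _, map_one, one_mul,
      prod_filter]
    refine prod_congr rfl fun i _ => ?_
    by_cases hi : (d i : ℕ) = 0
    · simp [hi]
    · simp [(mem_filter.1 hd).2.2 i hi, hb.ne']

theorem isPrimitiveRoot_pow_div_gcd {M : Type*} [CommMonoid M] {a : ℕ} {ζ : M}
    (hζ : IsPrimitiveRoot ζ a) {b : ℕ} (hb : 0 < b) : IsPrimitiveRoot (ζ ^ b) (a / a.gcd b) := by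
  rw [IsPrimitiveRoot.iff_orderOf, orderOf_pow' _ hb.ne', ← hζ.eq_orderOf]

theorem prod_range_mul_one_add_pow_mul {R : Type*} [CommRing R] [IsDomain R] {p : ℕ}
    (hp : 0 < p) {η : R} (hη : IsPrimitiveRoot η p) (u : ℕ) (z : R) :
    ∏ i ∈ range (p * u), (1 + η ^ i * z) = (1 - (-z) ^ p) ^ u := by
  have period : ∏ i ∈ range p, (1 + η ^ i * z) = 1 - (-z) ^ p := by
    simpa [eval_prod] using (congrArg (eval 1) (X_pow_sub_C_eq_prod hη hp (α := -z) rfl)).symm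
  induction u with
  | zero => simp
  | succ u ih =>
    simp only [Nat.mul_succ, prod_range_add, ih, pow_add, pow_mul, hη.pow_eq_one, one_pow,
      one_mul, period, pow_one]

theorem coeff_one_sub_C_mul_X_pow_pow {R : Type*} [CommRing R] {p : ℕ} (hp : 0 < p)
    (c : R) (u k : ℕ) : ((1 - (-(C c * X)) ^ p) ^ u : R[X]).coeff k =
      if p ∣ k then (-1) ^ (k + k / p) * c ^ k * (u.choose (k / p) : R) else 0 := by
  have hpow : (-(C c * X) : R[X]) ^ p = C ((-c) ^ p) * X ^ p := by
    rw [← neg_mul, ← C_neg, mul_pow, C_pow]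
  have hexpand : ((1 - (-(C c * X)) ^ p) ^ u : R[X]) =
      expand R p (((1 + X) ^ u).comp (C (-(-c) ^ p) * X)) := by
    rw [hpow]
    simp [sub_eq_add_neg]
  rw [hexpand, coeff_expand hp, comp_C_mul_X_coeff, coeff_one_add_X_pow]
  split_ifs with hk
  · obtain ⟨j, rfl⟩ := hk
    rw [Nat.mul_div_cancel_left _ hp, neg_pow, ← pow_mul, neg_pow c]
    ring
  · rfl

section RootPoint

variable {R : Type*} [CommSemiring R]

theorem coeff_prod_one_add_C_mul_X {σ : Type*} [Fintype σ] (A : Type*)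
    [CommSemiring A] [Algebra A R] (x : σ → R) (k : ℕ) :
    (∏ i, (1 + C (x i) * X)).coeff k =
      MvPolynomial.aeval x (MvPolynomial.esymm σ A k) := by
  have hcoeff (t : Finset σ) : (∏ i ∈ t, (C (x i) * X) : R[X]).coeff k =
      if #t = k then ∏ i ∈ t, x i else 0 := by
    rw [prod_mul_distrib, prod_const, ← map_prod, coeff_C_mul_X_pow]
    simp only [eq_comm]
  simp only [prod_one_add, finsetSum_coeff, hcoeff, ← sum_filter, ← powersetCard_eq_filter,
    MvPolynomial.esymm, map_sum, map_prod, MvPolynomial.aeval_X]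

/-- The point `(c, ζ c, …, ζ ^ (a - 1) c, 0, …, 0)` of `R ^ n`. For `ζ` a primitive `a`-th root of
unity in a domain and `a ≤ n`, all nonconstant elementary symmetric polynomials except the one of
degree `a` vanish there. -/
def rootPoint (n a : ℕ) (ζ c : R) : Fin n → R :=
  fun i => if (i : ℕ) < a then ζ ^ (i : ℕ) * c else 0

theorem rootPoint_pow (n a : ℕ) (ζ c : R) {b : ℕ} (hb : 0 < b) :
    rootPoint n a ζ c ^ b = rootPoint n a (ζ ^ b) (c ^ b) := by
  ext i
  simp only [rootPoint, Pi.pow_apply, ite_pow, zero_pow hb.ne', mul_pow, pow_right_comm]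

end RootPoint

section IsDomain

variable {R : Type*} [CommRing R] [IsDomain R] {A : Type*} [CommSemiring A] [Algebra A R]

theorem aeval_rootPoint_esymm {n p u : ℕ} (hp : 0 < p) (hn : p * u ≤ n) {η : R}
    (hη : IsPrimitiveRoot η p) (c : R) (k : ℕ) :
    MvPolynomial.aeval (rootPoint n (p * u) η c) (MvPolynomial.esymm (Fin n) A k) =
      if p ∣ k then (-1) ^ (k + k / p) * c ^ k * (u.choose (k / p) : R) else 0 := by
  have hprod : ∏ i, (1 + C (rootPoint n (p * u) η c i) * X) = (1 - (-(C c * X)) ^ p) ^ u := by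
    obtain ⟨d, rfl⟩ := Nat.exists_eq_add_of_le hn
    rw [← prod_range_mul_one_add_pow_mul hp (hη.map_of_injective (C_injective (R := R)))]
    simp only [rootPoint]
    rw [Fin.prod_univ_eq_prod_range
      (fun i => 1 + C (if i < p * u then η ^ i * c else 0) * X) (p * u + d), prod_range_add]
    rw [prod_eq_one (s := range d) (fun i _ => by simp), mul_one]
    refine prod_congr rfl fun i hi => ?_
    rw [if_pos (mem_range.1 hi), C_mul, C_pow, mul_assoc]
  rw [← coeff_prod_one_add_C_mul_X, hprod, coeff_one_sub_C_mul_X_pow_pow hp]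

theorem aeval_rootPoint_esymm_succ {n a : ℕ} (ha : 0 < a) (hn : a ≤ n) {ζ : R}
    (hζ : IsPrimitiveRoot ζ a) (c : R) (k : ℕ) :
    MvPolynomial.aeval (rootPoint n a ζ c) (MvPolynomial.esymm (Fin n) A (k + 1)) =
      if k + 1 = a then (-1) ^ (a + 1) * c ^ a else 0 := by
  have h := aeval_rootPoint_esymm (A := A) (n := n) (u := 1) ha (by rwa [mul_one]) hζ c (k + 1)
  rw [mul_one] at h
  rw [h]
  split_ifs with hdvd hka hka
  · rw [hka, Nat.div_self ha, Nat.choose_self, Nat.cast_one, mul_one]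
  · obtain ⟨j, hj⟩ := hdvd
    have hj1 : 1 < j := by
      by_contra hle
      interval_cases j <;> omega
    rw [hj, Nat.mul_div_cancel_left _ ha, Nat.choose_eq_zero_of_lt hj1, Nat.cast_zero, mul_zero]
  · exact absurd (hka ▸ dvd_rfl) hdvd
  · rfl

theorem aeval_rootPoint_pow_esymm {n a : ℕ} (ha : 0 < a) (hn : a ≤ n) {ζ : R}
    (hζ : IsPrimitiveRoot ζ a) (c : R) {b : ℕ} (hb : 0 < b) (k : ℕ) :
    MvPolynomial.aeval (rootPoint n a ζ c ^ b) (MvPolynomial.esymm (Fin n) A k) =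
      if a / a.gcd b ∣ k then
        (-1) ^ (k + k / (a / a.gcd b)) * (c ^ b) ^ k * ((a.gcd b).choose (k / (a / a.gcd b)) : R)
      else 0 := by
  have hp : 0 < a / a.gcd b := Nat.div_gcd_pos_of_pos_left b ha
  have hpu : a / a.gcd b * a.gcd b = a := Nat.div_mul_cancel (Nat.gcd_dvd_left a b)
  have hesymm := aeval_rootPoint_esymm (A := A) (n := n) (u := a.gcd b) hp (by rwa [hpu])
    (isPrimitiveRoot_pow_div_gcd hζ hb) (c ^ b) k
  rwa [hpu, ← rootPoint_pow n a ζ c hb] at hesymm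

end IsDomain

theorem coeff_aeval_single_C_mul_X_pow {σ A R : Type*} [CommSemiring A] [CommSemiring R]
    [Algebra A R] [DecidableEq σ] (ψ : MvPolynomial σ A) (i : σ) (q : R) {a : ℕ}
    (ha : 0 < a) (l : ℕ) :
    (MvPolynomial.aeval (Pi.single i (C q * X ^ a)) ψ).coeff (l * a) =
      algebraMap A R (ψ.coeff (Finsupp.single i l)) * q ^ l := by
  induction ψ using MvPolynomial.induction_on' with
  | add φ ψ hφ hψ => simp only [map_add, coeff_add, MvPolynomial.coeff_add, hφ, hψ, add_mul]
  | monomial d r =>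
    rw [MvPolynomial.aeval_monomial, MvPolynomial.coeff_monomial]
    by_cases hd : d = Finsupp.single i (d i)
    · generalize d i = k at hd
      subst hd
      rw [Finsupp.prod_single_index (by exact pow_zero _), Pi.single_eq_same, mul_pow, ← pow_mul,
        ← C_pow, Polynomial.algebraMap_apply, coeff_C_mul, coeff_C_mul, coeff_X_pow]
      rcases eq_or_ne k l with rfl | hkl
      · rw [if_pos (mul_comm k a), if_pos rfl, mul_one]
      · have hexp : l * a ≠ a * k := fun e =>
          hkl (Nat.eq_of_mul_eq_mul_left ha (by rw [← e, mul_comm]))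
        have hsingle : Finsupp.single i k ≠ Finsupp.single i l :=
          (Finsupp.single_injective i).ne hkl
        rw [if_neg hexp, if_neg hsingle, mul_zero, mul_zero, map_zero, zero_mul]
    · obtain ⟨j, hj, hji⟩ : ∃ j ∈ d.support, j ≠ i := by
        by_contra! hsupp
        exact hd (Finsupp.eq_single_iff.2 ⟨fun j hj => mem_singleton.2 (hsupp j hj), rfl⟩)
      have hl : d ≠ Finsupp.single i l := by
        rintro rfl
        simp at hd
      rw [Finsupp.prod, prod_eq_zero hj, mul_zero, if_neg hl, coeff_zero, map_zero, zero_mul]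
      rw [Pi.single_eq_of_ne hji, zero_pow (Finsupp.mem_support_iff.1 hj)]

theorem div_gcd_mul_gcd_of_mul_eq_mul {a b l m : ℕ} (ha : 0 < a) (h : l * a = m * b) :
    a / a.gcd b * l.gcd m = m := by
  refine Nat.eq_of_mul_eq_mul_left (Nat.gcd_pos_of_pos_left b ha) ?_
  rw [← mul_assoc, Nat.mul_div_cancel' (Nat.gcd_dvd_left a b), ← Nat.gcd_mul_left, mul_comm a l, h,
    mul_comm a m, Nat.gcd_mul_left, Nat.gcd_comm, mul_comm]

theorem algebraMap_coeff_single_of_isPrimitiveRoot {A K : Type*} [CommSemiring A] [CommRing K]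
    [IsDomain K] [Algebra A K] {n a b l m : ℕ} {ζ : K} (hζ : IsPrimitiveRoot ζ a) (hb : 0 < b)
    (h : l * a = m * b) (i : Fin n) (hi : (i : ℕ) + 1 = a) (ψ : MvPolynomial (Fin n) A)
    (hψ : MvPolynomial.aeval (fun i : Fin n => MvPolynomial.esymm (Fin n) A ((i : ℕ) + 1)) ψ =
      MvPolynomial.expand b (MvPolynomial.esymm (Fin n) A m)) :
    algebraMap A K (ψ.coeff (Finsupp.single i l)) =
      (-1) ^ (l * a + l.gcd m + l + m) * ((a.gcd b).choose (l.gcd m) : K) := by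
  have ha : 0 < a := hi ▸ Nat.succ_pos i
  have han : a ≤ n := hi ▸ i.isLt
  have hζX : IsPrimitiveRoot (C ζ) a := hζ.map_of_injective C_injective
  let x := rootPoint n a (C ζ) X
  have hleft : (fun j : Fin n => MvPolynomial.aeval x (MvPolynomial.esymm (Fin n) A (j + 1))) =
      Pi.single i (C ((-1) ^ (a + 1)) * X ^ a) := by
    ext1 j
    rw [aeval_rootPoint_esymm_succ ha han hζX, Pi.single_apply]
    simp [Fin.ext_iff, ← hi]
  have hp : 0 < a / a.gcd b := Nat.div_gcd_pos_of_pos_left b ha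
  have hpv : a / a.gcd b * l.gcd m = m := div_gcd_mul_gcd_of_mul_eq_mul ha h
  have hright : MvPolynomial.aeval x (MvPolynomial.expand b (MvPolynomial.esymm (Fin n) A m)) =
      C ((-1) ^ (m + l.gcd m) * ((a.gcd b).choose (l.gcd m) : K)) * X ^ (l * a) := by
    rw [MvPolynomial.aeval_expand, aeval_rootPoint_pow_esymm ha han hζX X hb m,
      if_pos (Dvd.intro _ hpv), Nat.div_eq_of_eq_mul_right hp hpv.symm, ← pow_mul, mul_comm b m, h]
    simp only [map_mul, map_pow, map_neg, map_one, map_natCast]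
    ring
  have hcompare : algebraMap A K (ψ.coeff (Finsupp.single i l)) * ((-1) ^ (a + 1)) ^ l =
      (-1) ^ (m + l.gcd m) * ((a.gcd b).choose (l.gcd m) : K) := by
    rw [← coeff_aeval_single_C_mul_X_pow ψ i _ ha, ← hleft, ← MvPolynomial.comp_aeval_apply, hψ,
      hright, coeff_C_mul, coeff_X_pow_self, mul_one]
  have hsign : ((-1) ^ (a + 1) : K) ^ l * (-1) ^ (l * a + l) = 1 := by
    rw [← pow_mul, ← pow_add]
    exact Even.neg_one_pow ⟨l * a + l, by ring⟩
  calc algebraMap A K (ψ.coeff (Finsupp.single i l))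
      = algebraMap A K (ψ.coeff (Finsupp.single i l)) * ((-1) ^ (a + 1)) ^ l *
          (-1) ^ (l * a + l) := by rw [mul_assoc, hsign, mul_one]
    _ = _ := by rw [hcompare]; ring

theorem exists_map_eq_of_aeval_esymm_eq_map {A R : Type*} [CommRing A] [CommRing R] (φ : A →+* R)
    {n : ℕ} {f : MvPolynomial (Fin n) A} (hf : f.IsSymmetric) {ψ : MvPolynomial (Fin n) R}
    (hψ : MvPolynomial.aeval (fun i : Fin n => MvPolynomial.esymm (Fin n) R ((i : ℕ) + 1)) ψ =
      MvPolynomial.map φ f) :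
    ∃ ψ₀ : MvPolynomial (Fin n) A,
      MvPolynomial.aeval (fun i : Fin n => MvPolynomial.esymm (Fin n) A ((i : ℕ) + 1)) ψ₀ = f ∧
        MvPolynomial.map φ ψ₀ = ψ := by
  obtain ⟨ψ₀, hψ₀⟩ := (MvPolynomial.esymmAlgHom_fin_bijective A n).2 ⟨f, hf⟩
  have hf₀ := (MvPolynomial.esymmAlgHom_apply ψ₀).symm.trans (congrArg Subtype.val hψ₀)
  refine ⟨ψ₀, hf₀, MvPolynomial.esymmAlgHom_fin_injective R le_rfl (Subtype.ext ?_)⟩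
  rw [MvPolynomial.esymmAlgHom_apply, MvPolynomial.esymmAlgHom_apply, hψ,
    ← congrArg (MvPolynomial.map φ) hf₀, MvPolynomial.aeval_def, MvPolynomial.eval₂_map,
    MvPolynomial.map_aeval]
  simp [MvPolynomial.map_esymm]

theorem stmt4_general {R : Type} [CommRing R] {n a b l m : ℕ} (hb : 0 < b) (h : l * a = m * b)
    (i : Fin n) (hi : (i : ℕ) + 1 = a) (ψ : MvPolynomial (Fin n) R)
    (hψ : MvPolynomial.aeval (fun i : Fin n => MvPolynomial.esymm (Fin n) R ((i : ℕ) + 1)) ψ =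
      msymmM n R (Multiset.replicate m b)) :
    ψ.coeff (Finsupp.single i l) =
      (-1) ^ (l * a - l.gcd m + l + m) * ((a.gcd b).choose (l.gcd m) : R) := by
  obtain ⟨ψ₀, hψ₀, rfl⟩ := exists_map_eq_of_aeval_esymm_eq_map (Int.castRingHom R)
    (f := MvPolynomial.expand b (MvPolynomial.esymm (Fin n) ℤ m)) (ψ := ψ)
    (fun e => by rw [MvPolynomial.rename_expand, MvPolynomial.rename_esymm])
    (by rw [hψ, msymmM_replicate R n m hb, MvPolynomial.map_expand, MvPolynomial.map_esymm])
  have hle : l.gcd m ≤ l * a := by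
    rcases l.eq_zero_or_pos with rfl | hl
    · simp_all [hb.ne']
    · exact (Nat.gcd_le_left m hl).trans (Nat.le_mul_of_pos_right l (by omega))
  have hcoeff : ψ₀.coeff (Finsupp.single i l) =
      (-1) ^ (l * a - l.gcd m + l + m) * ((a.gcd b).choose (l.gcd m) : ℤ) := by
    have hcomplex := algebraMap_coeff_single_of_isPrimitiveRoot
      (Complex.isPrimitiveRoot_exp a (by omega)) hb h i hi ψ₀ hψ₀
    rw [neg_one_pow_congr (n := l * a - l.gcd m + l + m) (by grind), eq_intCast] at hcomplex
    exact_mod_cast hcomplex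
  rw [MvPolynomial.coeff_map, hcoeff]
  simp

theorem stmt4 (a b l m w : ℕ) (ha : 0 < a) (hb : 0 < b) (hl : 0 < l) (hm : 0 < m)
    (hw : 0 < w) (hla : l * a = w) (hmb : m * b = w)
    (n : ℕ) (hn : w ≤ n)
    -- `ψ` is the unique polynomial with `m_μ = ψ(e_1,…,e_n)`, where `μ` consists of
    -- `m` copies of `b`.
    (ψ : MvPolynomial (Fin n) ℤ)
    (hψ : MvPolynomial.aeval (fun i : Fin n => MvPolynomial.esymm (Fin n) ℤ ((i : ℕ) + 1)) ψ =
      msymmM n ℤ (Multiset.replicate m b)) :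
    -- the coefficient `d_{λμ}` of `X_a^l` in `ψ` equals `(-1)^(w-v+l+m)·C(u,v)` where
    -- `u = gcd(a,b)`, `v = gcd(l,m)`; in particular if `u < v` then `d_{λμ} = 0`.
    ψ.coeff (Finsupp.single (⟨a - 1, by have := Nat.le_mul_of_pos_left a hl; omega⟩ : Fin n) l) =
        (-1) ^ (w - Nat.gcd l m + l + m) * (Nat.choose (Nat.gcd a b) (Nat.gcd l m) : ℤ) ∧
      (Nat.gcd a b < Nat.gcd l m →
        ψ.coeff (Finsupp.single (⟨a - 1, by have := Nat.le_mul_of_pos_left a hl; omega⟩ : Fin n) l) = 0) := by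
  subst hla
  have hcoeff := stmt4_general hb hmb.symm ⟨a - 1, by have := Nat.le_mul_of_pos_left a hl; omega⟩
    (Nat.sub_add_cancel ha) ψ hψ
  exact ⟨hcoeff, fun huv => by rw [hcoeff, Nat.choose_eq_zero_of_lt huv, Nat.cast_zero, mul_zero]⟩
end

section
/- Let k, ℓ ≥ 0 and let F ∈ R_k. Then p^ℓ·F ∈ R_{k+ℓ} and F^{p^ℓ} ∈ R_{k+ℓ}. -/
open scoped Classical

/-- The subring `R_k = ℤ[X₁^{p^k},…,Xₙ^{p^k}] + p·ℤ[X₁^{p^{k-1}},…,Xₙ^{p^{k-1}}] + ⋯ +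
p^k·ℤ[X₁,…,Xₙ]` of `ℤ[X₁,…,Xₙ]`, viewed as a set. -/
def Rset (p n k : ℕ) : Set (MvPolynomial (Fin n) ℤ) :=
  { F | ∃ g : ℕ → MvPolynomial (Fin n) ℤ,
      F = ∑ i ∈ Finset.range (k + 1),
        (p : MvPolynomial (Fin n) ℤ) ^ (k - i) *
          MvPolynomial.aeval (fun j => MvPolynomial.X j ^ p ^ i) (g i) }

/-!
Let `e_i` be the substitution `X_j ↦ X_j ^ p ^ i`, so that `R_k = ∑ i ≤ k, p ^ (k - i) * im e_i`,
which makes sense over any commutative semiring and in any set of variables. As the images of the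
`e_i` decrease with `i`, each `R_k` is closed under multiplication, and clearly `p * R_k ⊆ R_{k+1}`.
By the binomial theorem in the ring `R_k`, the map `F ↦ F ^ p` is additive on `R_k` modulo
`p * R_k`, hence modulo `R_{k+1}`, so `F ^ p ∈ R_{k+1}` need only be checked on the additive
generators `p ^ (k - i) * e_i (a * X ^ m)` of `R_k`. The `p`-th power of such a generator is a
multiple of `p ^ (k - i) * e_{i+1} (a ^ p * X ^ m)`. Iterating `l` times gives the result.
-/

open MvPolynomial

theorem sum_pow_prime_mem {B S T ι : Type*} [CommSemiring B] [SetLike S B] [SubsemiringClass S B]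
    [SetLike T B] [AddSubmonoidClass T B] {p : ℕ} (hp : p.Prime) {R : S} {M : T}
    (hRM : ∀ x ∈ R, (p : B) * x ∈ M) {s : Finset ι} {f : ι → B} (hR : ∀ i ∈ s, f i ∈ R)
    (hM : ∀ i ∈ s, f i ^ p ∈ M) : (∑ i ∈ s, f i) ^ p ∈ M := by
  have add_pow_mem (x y : B) : x ∈ R ∧ x ^ p ∈ M → y ∈ R ∧ y ^ p ∈ M →
      x + y ∈ R ∧ (x + y) ^ p ∈ M := by
    rintro ⟨hxR, hxM⟩ ⟨hyR, hyM⟩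
    refine ⟨add_mem hxR hyR, ?_⟩
    rw [add_pow_prime_eq' hp]
    refine add_mem (add_mem hxM hyM) (hRM _ (sum_mem fun i _ => ?_))
    exact mul_mem (mul_mem (pow_mem hxR i) (pow_mem hyR (p - i))) (natCast_mem R _)
  refine (Finset.sum_induction f (fun x => x ∈ R ∧ x ^ p ∈ M) add_pow_mem ?_
    fun i hi => ⟨hR i hi, hM i hi⟩).2
  exact ⟨zero_mem R, by simpa only [zero_pow hp.ne_zero] using zero_mem M⟩

section

variable (σ A : Type*) [CommSemiring A] (p k : ℕ)

/-- The sum of `p ^ (k - i) * A[X_j ^ p ^ i : j ∈ σ]` over `i ≤ k`, as an `A`-module. This is the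
module underlying `expandSubalgebra`. -/
noncomputable def expandSubmodule : Submodule A (MvPolynomial σ A) where
  carrier := { F | ∃ g : ℕ → MvPolynomial σ A,
    F = ∑ i ∈ Finset.range (k + 1), (p : MvPolynomial σ A) ^ (k - i) * expand (p ^ i) (g i) }
  zero_mem' := ⟨0, by simp⟩
  add_mem' := by
    rintro _ _ ⟨f, rfl⟩ ⟨g, rfl⟩
    exact ⟨f + g, by simp only [Pi.add_apply, map_add, mul_add, Finset.sum_add_distrib]⟩
  smul_mem' := by
    rintro a _ ⟨g, rfl⟩
    exact ⟨a • g, by simp only [Pi.smul_apply, map_smul, mul_smul_comm, Finset.smul_sum]⟩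

variable {σ A p k}

theorem pow_mul_expand_mem_expandSubmodule {i : ℕ} (hik : i ≤ k) (g : MvPolynomial σ A) :
    (p : MvPolynomial σ A) ^ (k - i) * expand (p ^ i) g ∈ expandSubmodule σ A p k := by
  refine ⟨Pi.single i g, ?_⟩
  rw [Finset.sum_eq_single_of_mem i (Finset.mem_range_succ_iff.2 hik), Pi.single_eq_same]
  intro j _ hj
  rw [Pi.single_eq_of_ne hj, map_zero, mul_zero]

theorem pow_mul_expand_mul_mem_expandSubmodule {i j : ℕ} (hij : i ≤ j) (hjk : j ≤ k)
    (f g : MvPolynomial σ A) :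
    ((p : MvPolynomial σ A) ^ (k - i) * expand (p ^ i) f) *
      ((p : MvPolynomial σ A) ^ (k - j) * expand (p ^ j) g) ∈ expandSubmodule σ A p k := by
  have expand_g : expand (p ^ j) g = expand (p ^ i) (expand (p ^ (j - i)) g) := by
    rw [← expand_mul, ← pow_add, Nat.add_sub_cancel' hij]
  convert pow_mul_expand_mem_expandSubmodule (hij.trans hjk)
    ((p : MvPolynomial σ A) ^ (k - j) * (f * expand (p ^ (j - i)) g)) using 1
  rw [expand_g, map_mul, map_mul, map_pow, map_natCast]
  ring

theorem mul_mem_expandSubmodule {F G : MvPolynomial σ A} (hF : F ∈ expandSubmodule σ A p k)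
    (hG : G ∈ expandSubmodule σ A p k) : F * G ∈ expandSubmodule σ A p k := by
  obtain ⟨f, rfl⟩ := hF
  obtain ⟨g, rfl⟩ := hG
  rw [Finset.sum_mul_sum]
  refine sum_mem fun i hi => sum_mem fun j hj => ?_
  rw [Finset.mem_range_succ_iff] at hi hj
  rcases le_total i j with hij | hji
  · exact pow_mul_expand_mul_mem_expandSubmodule hij hj (f i) (g j)
  · rw [mul_comm]
    exact pow_mul_expand_mul_mem_expandSubmodule hji hi (g j) (f i)

variable (σ A p k) in
/-- The analogue of the ring `R_k` over a commutative semiring `A` and in variables indexed by `σ`,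
as a subalgebra of the polynomial algebra; `R_k` itself is the case `A = ℤ`, `σ = Fin n`. -/
noncomputable def expandSubalgebra : Subalgebra A (MvPolynomial σ A) :=
  (expandSubmodule σ A p k).toSubalgebra
    (by simpa using pow_mul_expand_mem_expandSubmodule le_rfl (1 : MvPolynomial σ A))
    fun _ _ => mul_mem_expandSubmodule

theorem coe_expandSubalgebra_eq_Rset (p n k : ℕ) :
    (expandSubalgebra (Fin n) ℤ p k : Set (MvPolynomial (Fin n) ℤ)) = Rset p n k :=
  rfl

theorem pow_mul_expand_mem_expandSubalgebra {i : ℕ} (hik : i ≤ k) (g : MvPolynomial σ A) :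
    (p : MvPolynomial σ A) ^ (k - i) * expand (p ^ i) g ∈ expandSubalgebra σ A p k :=
  pow_mul_expand_mem_expandSubmodule hik g

theorem natCast_pow_mul_mem_expandSubalgebra (l : ℕ) {F : MvPolynomial σ A}
    (hF : F ∈ expandSubalgebra σ A p k) :
    (p : MvPolynomial σ A) ^ l * F ∈ expandSubalgebra σ A p (k + l) := by
  obtain ⟨g, rfl⟩ := hF
  rw [Finset.mul_sum]
  refine sum_mem fun i hi => ?_
  have hik : i ≤ k := Finset.mem_range_succ_iff.1 hi
  rw [← mul_assoc, ← pow_add, ← Nat.add_sub_assoc hik, add_comm l k]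
  exact pow_mul_expand_mem_expandSubalgebra (Nat.le_add_right_of_le hik) (g i)

theorem pow_mul_expand_monomial_pow_mem_expandSubalgebra (hp : p ≠ 0) {i : ℕ} (hik : i ≤ k)
    (m : σ →₀ ℕ) (a : A) :
    ((p : MvPolynomial σ A) ^ (k - i) * expand (p ^ i) (monomial m a)) ^ p ∈
      expandSubalgebra σ A p (k + 1) := by
  have expand_pow :
      expand (p ^ i) (monomial m a) ^ p = expand (p ^ (i + 1)) (monomial m (a ^ p)) := by
    rw [expand_monomial, expand_monomial, monomial_pow, smul_smul, pow_succ']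
  have generator_mem :
      (p : MvPolynomial σ A) ^ (k - i) * expand (p ^ (i + 1)) (monomial m (a ^ p)) ∈
        expandSubalgebra σ A p (k + 1) := by
    simpa only [Nat.add_sub_add_right] using
      pow_mul_expand_mem_expandSubalgebra (add_le_add_left hik 1) (monomial m (a ^ p))
  rw [mul_pow, expand_pow, ← pow_sub_one_mul hp, mul_assoc]
  exact mul_mem (pow_mem (pow_mem (natCast_mem _ p) _) _) generator_mem

theorem pow_prime_mem_expandSubalgebra (hp : p.Prime) {F : MvPolynomial σ A}
    (hF : F ∈ expandSubalgebra σ A p k) : F ^ p ∈ expandSubalgebra σ A p (k + 1) := by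
  have prime_mul_mem (G : MvPolynomial σ A) (hG : G ∈ expandSubalgebra σ A p k) :
      (p : MvPolynomial σ A) * G ∈ expandSubalgebra σ A p (k + 1) := by
    simpa only [pow_one] using natCast_pow_mul_mem_expandSubalgebra 1 hG
  obtain ⟨g, rfl⟩ := hF
  refine sum_pow_prime_mem hp prime_mul_mem (fun i hi => ?_) fun i hi => ?_ <;>
    rw [Finset.mem_range_succ_iff] at hi
  · exact pow_mul_expand_mem_expandSubalgebra hi (g i)
  · rw [(g i).as_sum, map_sum, Finset.mul_sum]
    exact sum_pow_prime_mem hp prime_mul_mem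
      (fun m _ => pow_mul_expand_mem_expandSubalgebra hi (monomial m _))
      fun m _ => pow_mul_expand_monomial_pow_mem_expandSubalgebra hp.ne_zero hi m _

theorem pow_prime_pow_mem_expandSubalgebra (hp : p.Prime) (l : ℕ) {F : MvPolynomial σ A}
    (hF : F ∈ expandSubalgebra σ A p k) : F ^ p ^ l ∈ expandSubalgebra σ A p (k + l) := by
  induction l with
  | zero => simpa only [pow_zero, pow_one, add_zero] using hF
  | succ l ih =>
    rw [pow_succ, pow_mul]
    exact pow_prime_mem_expandSubalgebra hp ih

theorem stmt5_general (hp : p.Prime) (l : ℕ) {F : MvPolynomial σ A}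
    (hF : F ∈ expandSubalgebra σ A p k) :
    (p : MvPolynomial σ A) ^ l * F ∈ expandSubalgebra σ A p (k + l) ∧
      F ^ p ^ l ∈ expandSubalgebra σ A p (k + l) :=
  ⟨natCast_pow_mul_mem_expandSubalgebra l hF, pow_prime_pow_mem_expandSubalgebra hp l hF⟩

end

theorem stmt5 (p : ℕ) (hp : p.Prime) (n : ℕ) (hn : 1 ≤ n) (k l : ℕ)
    (F : MvPolynomial (Fin n) ℤ) (hF : F ∈ Rset p n k) :
    (p : MvPolynomial (Fin n) ℤ) ^ l * F ∈ Rset p n (k + l) ∧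
      F ^ p ^ l ∈ Rset p n (k + l) := by
  rw [← coe_expandSubalgebra_eq_Rset] at hF ⊢
  exact stmt5_general hp l hF
end

section
/- Let k, ℓ ≥ 0 and let F ∈ R_k. Then for any ψ_1,…,ψ_n ∈ R_ℓ the composite polynomial F(ψ_1,…,ψ_n) lies in R_{k+ℓ}. -/
/-!
For a commutative ring `A`, let `T_k(A)` be the image of the ghost component
`w_k(a) = ∑_{i ≤ k} p^i a_i^{p^{k-i}}` on the Witt vectors of `A`. It is a subring because `w_k` is
a ring homomorphism, and Verschiebung and Frobenius give `p T_k ⊆ T_{k+1} ⊆ T_k`. Moreover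
`x ∈ T_k` implies `x^p ∈ T_{k+1}`: writing `x = a^{p^k} + p y` with `y ∈ T_{k-1}` yields
`x^p ≡ a^{p^{k+1}}` modulo `p² T_{k-1} ⊆ T_{k+1}`.

Hence a ring homomorphism `f : B → A` with values in `T_l(A)` maps `T_k(B)` into `T_{k+l}(A)`, since
`f(∑ p^i b_i^{p^{k-i}}) = ∑ p^i f(b_i)^{p^{k-i}}` and `f(b_i)^{p^{k-i}} ∈ T_{l+k-i}(A)`.

Finally `R_k = T_k(ℤ[X])`. The inclusion `R_k ⊆ T_k` holds because `X_j^{p^i} ∈ T_i`; the other one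
is Dwork's congruence `w_{k+1}(a) ≡ φ(w_k(a))` modulo `p^{k+1}` for the Frobenius lift
`φ : X_j ↦ X_j^p`, together with `φ(R_k) + p^{k+1} ℤ[X] ⊆ R_{k+1}`.
-/

open scoped Classical

open MvPolynomial WittVector

section RingTheory

variable {A : Type*} [CommRing A]

theorem aeval_mem_subring {σ : Type*} (S : Subring A) {f : σ → A} (hf : ∀ j, f j ∈ S)
    (g : MvPolynomial σ ℤ) : aeval f g ∈ S := by
  have hcoe := Subalgebra.mvPolynomial_aeval_coe (subalgebraOfSubring S) (fun j => ⟨f j, hf j⟩) g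
  exact hcoe ▸ SetLike.coe_mem _

theorem exists_mem_add_natCast_mul_pow_eq {S : Subring A} {b y : A} (hb : b ∈ S) (hy : y ∈ S)
    (p : ℕ) : ∃ s ∈ S, (b + p * y) ^ p = b ^ p + (p : A) ^ 2 * s := by
  lift b to S using hb
  lift y to S using hy
  have hdvd : (p : S) ∣ (b + p * y) - b := ⟨y, add_sub_cancel_left _ _⟩
  obtain ⟨s, hs⟩ := dvd_sub_pow_of_dvd_sub hdvd 1
  rw [pow_one, sub_eq_iff_eq_add'] at hs
  exact ⟨s, s.2, mod_cast congrArg Subtype.val hs⟩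

end RingTheory

section Ghost

variable {p : ℕ} [Fact p.Prime] {A B : Type*} [CommRing A] [CommRing B]

theorem ghostComponent_eq_sum (k : ℕ) (x : WittVector p A) :
    ghostComponent k x = ∑ i ∈ Finset.range (k + 1), (p : A) ^ i * x.coeff i ^ p ^ (k - i) := by
  rw [ghostComponent_apply, aeval_wittPolynomial]

theorem ghostComponent_succ (k : ℕ) (x : WittVector p A) :
    ghostComponent (k + 1) x = x.coeff 0 ^ p ^ (k + 1) + p * ghostComponent k (x.shift 1) := by
  rw [ghostComponent_eq_sum, ghostComponent_eq_sum, Finset.sum_range_succ', Finset.mul_sum,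
    add_comm]
  simp only [shift_coeff, pow_zero, one_mul, Nat.sub_zero, Nat.add_sub_add_right, pow_succ',
    mul_assoc, add_comm 1]

theorem pow_succ_dvd_ghostComponent_succ_sub_map {φ : A →+* A} (hφ : ∀ a, (p : A) ∣ a ^ p - φ a)
    (k : ℕ) (x : WittVector p A) :
    (p : A) ^ (k + 1) ∣ ghostComponent (k + 1) x - φ (ghostComponent k x) := by
  rw [ghostComponent_eq_sum, ghostComponent_eq_sum, Finset.sum_range_succ, map_sum,
    add_sub_right_comm, ← Finset.sum_sub_distrib]
  refine dvd_add (Finset.dvd_sum fun i hi => ?_) (dvd_mul_right _ _)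
  obtain ⟨m, rfl⟩ := Nat.exists_eq_add_of_le (Finset.mem_range_succ_iff.1 hi)
  have hpow := dvd_sub_pow_of_dvd_sub (hφ (x.coeff i)) m
  rw [← pow_mul, ← pow_succ'] at hpow
  rw [add_assoc, Nat.add_sub_cancel_left, Nat.add_sub_cancel_left, map_mul, map_pow, map_pow,
    map_natCast, ← mul_sub, pow_add]
  exact mul_dvd_mul_left _ hpow

variable (p A) in
/-- The subring `{∑_{i ≤ k} p^i a_i^{p^{k-i}} | a_i ∈ A}` of `A`, encoded as the range of the
`k`-th ghost component. It extends the definition of `R_k` from `ℤ[X₁,…,Xₙ]` to all commutative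
rings, see `coe_ghostSubring_mvPolynomial`. -/
noncomputable def ghostSubring (k : ℕ) : Subring A :=
  (ghostComponent k : WittVector p A →+* A).range

theorem mem_ghostSubring {k : ℕ} {a : A} :
    a ∈ ghostSubring p A k ↔ ∃ x : WittVector p A, ghostComponent k x = a :=
  RingHom.mem_range

theorem pow_prime_pow_mem_ghostSubring (k : ℕ) (a : A) : a ^ p ^ k ∈ ghostSubring p A k :=
  mem_ghostSubring.2 ⟨teichmuller p a, ghostComponent_teichmuller p a k⟩

theorem ghostSubring_succ_le (k : ℕ) : ghostSubring p A (k + 1) ≤ ghostSubring p A k := by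
  rintro _ ⟨x, rfl⟩
  exact mem_ghostSubring.2 ⟨frobenius x, ghostComponent_frobenius k x⟩

theorem natCast_pow_mul_mem_ghostSubring {k : ℕ} {a : A} (ha : a ∈ ghostSubring p A k) (m : ℕ) :
    (p : A) ^ m * a ∈ ghostSubring p A (k + m) := by
  induction m with
  | zero => simpa using ha
  | succ m ih =>
    obtain ⟨x, hx⟩ := mem_ghostSubring.1 ih
    exact mem_ghostSubring.2
      ⟨verschiebung x, by rw [← add_assoc, ghostComponent_verschiebung, hx, pow_succ', mul_assoc]⟩

theorem pow_mem_ghostSubring_succ {k : ℕ} {a : A} (ha : a ∈ ghostSubring p A k) :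
    a ^ p ∈ ghostSubring p A (k + 1) := by
  obtain ⟨x, rfl⟩ := mem_ghostSubring.1 ha
  cases k with
  | zero => simpa using pow_prime_pow_mem_ghostSubring 1 (ghostComponent 0 x)
  | succ k =>
    have hb : x.coeff 0 ^ p ^ (k + 1) ∈ ghostSubring p A k :=
      ghostSubring_succ_le k (pow_prime_pow_mem_ghostSubring (k + 1) _)
    obtain ⟨s, hs, hpow⟩ :=
      exists_mem_add_natCast_mul_pow_eq hb (mem_ghostSubring.2 ⟨x.shift 1, rfl⟩) p
    rw [ghostComponent_succ, hpow, ← pow_mul, ← pow_succ]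
    exact add_mem (pow_prime_pow_mem_ghostSubring (k + 2) _)
      (natCast_pow_mul_mem_ghostSubring hs 2)

theorem pow_prime_pow_mem_ghostSubring_add {k : ℕ} {a : A} (ha : a ∈ ghostSubring p A k) (m : ℕ) :
    a ^ p ^ m ∈ ghostSubring p A (k + m) := by
  induction m with
  | zero => simpa using ha
  | succ m ih =>
    rw [pow_succ, pow_mul]
    exact pow_mem_ghostSubring_succ ih

theorem map_mem_ghostSubring_add {k l : ℕ} {f : B →+* A} (hf : ∀ b, f b ∈ ghostSubring p A l)
    {b : B} (hb : b ∈ ghostSubring p B k) : f b ∈ ghostSubring p A (k + l) := by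
  obtain ⟨x, rfl⟩ := mem_ghostSubring.1 hb
  rw [ghostComponent_eq_sum, map_sum]
  refine sum_mem fun i hi => ?_
  have hindex : k + l = l + (k - i) + i := by grind
  rw [map_mul, map_pow, map_pow, map_natCast, hindex]
  exact natCast_pow_mul_mem_ghostSubring (pow_prime_pow_mem_ghostSubring_add (hf _) _) _

theorem stmt6_general {σ : Type*} {k l : ℕ} {F : MvPolynomial σ ℤ}
    (hF : F ∈ ghostSubring p (MvPolynomial σ ℤ) k) {ψ : σ → A}
    (hψ : ∀ j, ψ j ∈ ghostSubring p A l) : aeval ψ F ∈ ghostSubring p A (k + l) :=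
  map_mem_ghostSubring_add (f := (aeval ψ).toRingHom) (aeval_mem_subring _ hψ) hF

end Ghost

section IntegerPolynomials

variable {p : ℕ}

theorem natCast_dvd_pow_sub_expand [Fact p.Prime] {σ : Type*} (g : MvPolynomial σ ℤ) :
    (p : MvPolynomial σ ℤ) ∣ g ^ p - expand p g := by
  have hdvd : C (p : ℤ) ∣ g ^ p - expand p g := by
    rw [C_dvd_iff_zmod, map_sub, map_pow, map_expand, expand_zmod, sub_self]
  simpa using hdvd

variable {n k : ℕ}

theorem mem_Rset_zero (F : MvPolynomial (Fin n) ℤ) : F ∈ Rset p n 0 :=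
  ⟨fun _ => F, by simp⟩

theorem expand_add_mem_Rset_succ {F : MvPolynomial (Fin n) ℤ} (hF : F ∈ Rset p n k)
    (h : MvPolynomial (Fin n) ℤ) :
    expand p F + (p : MvPolynomial (Fin n) ℤ) ^ (k + 1) * h ∈ Rset p n (k + 1) := by
  obtain ⟨g, rfl⟩ := hF
  have hexpand (i : ℕ) : expand p (aeval (fun j => X j ^ p ^ i) (g i)) =
      aeval (fun j : Fin n => (X j : MvPolynomial (Fin n) ℤ) ^ p ^ (i + 1)) (g i) := by
    rw [← AlgHom.comp_apply, comp_aeval]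
    simp only [map_pow, expand_X, ← pow_mul, ← pow_succ']
  refine ⟨fun | 0 => h | i + 1 => g i, ?_⟩
  rw [Finset.sum_range_succ' _ (k + 1)]
  simp only [map_sum, map_mul, map_pow, map_natCast, hexpand, Nat.add_sub_add_right, pow_zero,
    pow_one, Nat.sub_zero, aeval_X_left_apply]

variable [Fact p.Prime]

theorem Rset_subset_ghostSubring :
    Rset p n k ⊆ ghostSubring p (MvPolynomial (Fin n) ℤ) k := by
  rintro _ ⟨g, rfl⟩
  refine sum_mem fun i hi => ?_
  have hsubst : aeval (fun j => X j ^ p ^ i) (g i) ∈ ghostSubring p (MvPolynomial (Fin n) ℤ) i :=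
    aeval_mem_subring _ (fun j => pow_prime_pow_mem_ghostSubring i (X j)) _
  have hterm := natCast_pow_mul_mem_ghostSubring hsubst (k - i)
  rwa [Nat.add_sub_of_le (Finset.mem_range_succ_iff.1 hi)] at hterm

theorem ghostComponent_mem_Rset (k : ℕ) (x : WittVector p (MvPolynomial (Fin n) ℤ)) :
    ghostComponent k x ∈ Rset p n k := by
  induction k with
  | zero => exact mem_Rset_zero _
  | succ k ih =>
    let φ : MvPolynomial (Fin n) ℤ →+* MvPolynomial (Fin n) ℤ := (expand p).toRingHom
    obtain ⟨h, hh⟩ :=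
      pow_succ_dvd_ghostComponent_succ_sub_map (φ := φ) natCast_dvd_pow_sub_expand k x
    rw [sub_eq_iff_eq_add'.1 hh]
    exact expand_add_mem_Rset_succ ih h

theorem coe_ghostSubring_mvPolynomial (p n k : ℕ) [Fact p.Prime] :
    (ghostSubring p (MvPolynomial (Fin n) ℤ) k : Set (MvPolynomial (Fin n) ℤ)) = Rset p n k := by
  refine Set.Subset.antisymm ?_ Rset_subset_ghostSubring
  rintro _ ⟨x, rfl⟩
  exact ghostComponent_mem_Rset k x

end IntegerPolynomials

theorem stmt6 (p : ℕ) (hp : p.Prime) (n : ℕ) (hn : 1 ≤ n) (k l : ℕ)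
    (F : MvPolynomial (Fin n) ℤ) (hF : F ∈ Rset p n k)
    (ψ : Fin n → MvPolynomial (Fin n) ℤ) (hψ : ∀ j, ψ j ∈ Rset p n l) :
    MvPolynomial.aeval ψ F ∈ Rset p n (k + l) := by
  have : Fact p.Prime := ⟨hp⟩
  simp only [← coe_ghostSubring_mvPolynomial] at hF hψ ⊢
  exact stmt6_general hF hψ
end

section
/- Let t ≥ j ≥ 0, let w' ≥ 1, and set w = w'·p^t. Let λ' be a partition of w' and set λ = p^t·λ'. Let μ be a partition of w such that there does not exist a partition μ' with μ = p^{j+1}*μ' (i.e., μ is not the multiset sum of p^{j+1} copies of some partition). Then for every n ≥ w, p^{t−j} divides the coefficient d_{λμ}. In particular this holds if p^{j+1} does not divide the number of parts of μ. -/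
/-!
The matrix `d` is symmetric: expanding `∏_{i,j} (1 + x_i y_j)` in either set of variables gives
`∑_μ m_μ(x) e_μ(y) = ∑_λ e_λ(x) m_λ(y)`, and the products `e_λ(x) e_μ(y)` are linearly independent.
It therefore suffices to study the coefficient of `e_μ` in `m_λ`, where `λ = p^t·λ'`.

Now `m_λ(x) = m_{λ'}(x^{p^t})`. Let `φ` be the endomorphism of `ℤ[e_1,…,e_m]` induced by
`x_i ↦ x_i^p`. Modulo `p` it is the Frobenius map, so `φ(e_k) = e_k^p + p h_k`, and all partial
derivatives of `φ(e_k)` with respect to the `e_i` are divisible by `p`. By the chain rule those of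
`φ^t(f)` are divisible by `p^t` for every `f`, in particular those of `m_λ`. Thus `p^t` divides
`d_{μλ}` times the multiplicity in `μ` of any part. As `μ` is not `p^{j+1} * μ'`, some multiplicity
is not divisible by `p^{j+1}`, and `p^{t-j}` divides `d_{μλ}`.
-/

open scoped Classical

/-- The exponent vector of the monomial `X_{λ₁}⋯X_{λₖ}` associated to a partition
`lam = {λ₁,…,λₖ}` with parts ≤ n; the variable `X_m` corresponds to the index `m - 1`. -/
noncomputable def expOf (n : ℕ) (lam : Multiset ℕ) : Fin n →₀ ℕ :=
  Finsupp.equivFunOnFinite.symm fun i : Fin n => lam.count ((i : ℕ) + 1)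

open MvPolynomial

/-! ### Polynomials in the elementary symmetric polynomials -/

section ElementarySymmetric

variable {n : ℕ} {R : Type*} [CommRing R]

/-- The substitution of the elementary symmetric polynomials for the variables. As in `expOf`, the
variable with index `i` stands for `e_{i+1}`. -/
noncomputable def esymmSubst (n : ℕ) (R : Type*) [CommRing R] :
    MvPolynomial (Fin n) R →ₐ[R] MvPolynomial (Fin n) R :=
  aeval fun i : Fin n => esymm (Fin n) R (i + 1)

lemma esymmSubst_X (i : Fin n) : esymmSubst n R (X i) = esymm (Fin n) R (i + 1) :=
  aeval_X _ i

lemma esymmSubst_C (a : R) : esymmSubst n R (C a) = C a :=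
  (esymmSubst n R).commutes a

lemma coe_esymmAlgHom (f : MvPolynomial (Fin n) R) :
    (esymmAlgHom (Fin n) R n f : MvPolynomial (Fin n) R) = esymmSubst n R f :=
  esymmAlgHom_apply f

lemma esymmSubst_injective : Function.Injective (esymmSubst n R) := fun f g h =>
  esymmAlgHom_fin_injective R le_rfl (Subtype.ext (by rwa [coe_esymmAlgHom, coe_esymmAlgHom]))

lemma isSymmetric_esymmSubst (f : MvPolynomial (Fin n) R) : (esymmSubst n R f).IsSymmetric :=
  coe_esymmAlgHom f ▸ (esymmAlgHom (Fin n) R n f).2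

lemma exists_esymmSubst_eq {f : MvPolynomial (Fin n) R} (hf : f.IsSymmetric) :
    ∃ g, esymmSubst n R g = f := by
  obtain ⟨g, hg⟩ := esymmAlgHom_fin_surjective R le_rfl ⟨f, hf⟩
  exact ⟨g, by rw [← coe_esymmAlgHom, hg]⟩

end ElementarySymmetric

lemma isSymmetric_expand_s8 {σ R : Type*} [CommSemiring R] {f : MvPolynomial σ R}
    (hf : f.IsSymmetric) (q : ℕ) : (expand q f).IsSymmetric := fun e => by
  rw [rename_expand, hf e]

lemma isSymmetric_of_C_mul {σ R : Type*} [CommSemiring R] [IsCancelMulZero R] {a : R} (ha : a ≠ 0)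
    {f : MvPolynomial σ R} (hf : (C a * f).IsSymmetric) : f.IsSymmetric := fun e => by
  ext b
  refine mul_left_cancel₀ ha ?_
  simpa only [map_mul, rename_C, coeff_C_mul] using congrArg (coeff b) (hf e)

/-! ### Gradients of Frobenius lifts -/

section Gradient

variable {σ R : Type*} [CommSemiring R]

lemma derivation_aeval [Fintype σ] {A M : Type*} [CommSemiring A] [Algebra R A] [AddCommMonoid M]
    [Module A M] [Module R M] [IsScalarTower R A M] (D : Derivation R A M) (g : σ → A)
    (f : MvPolynomial σ R) :
    D (aeval g f) = ∑ i, aeval g (pderiv i f) • D (g i) := by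
  induction f using MvPolynomial.induction_on with
  | C a => simp
  | add f₁ f₂ h₁ h₂ => simp only [map_add, h₁, h₂, add_smul, Finset.sum_add_distrib]
  | mul_X f i hf =>
    have hX : ∑ k, aeval g f • aeval g (pderiv k (X i : MvPolynomial σ R)) • D (g k) =
        aeval g f • D (g i) := by
      rw [Finset.sum_eq_single i]
      · simp
      · intro k _ hk
        simp [pderiv_X_of_ne hk.symm]
      · simp
    simp only [map_mul, aeval_X, Derivation.leibniz, smul_eq_mul, hf, map_add, add_smul,
      Finset.sum_add_distrib, hX, Finset.smul_sum, mul_smul]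

lemma C_pow_dvd_pderiv_iterate_aeval [Finite σ] {a : R} {g : σ → MvPolynomial σ R}
    (hg : ∀ i k, C a ∣ pderiv k (g i)) (t : ℕ) (f : MvPolynomial σ R) (k : σ) :
    C (a ^ t) ∣ pderiv k ((aeval g : MvPolynomial σ R →ₐ[R] MvPolynomial σ R)^[t] f) := by
  have := Fintype.ofFinite σ
  induction t generalizing k with
  | zero => simp
  | succ t ih =>
    rw [Function.iterate_succ_apply', derivation_aeval, pow_succ, C_mul]
    refine Finset.dvd_sum fun i _ => mul_dvd_mul ?_ (hg i k)
    simpa only [aeval_C, algebraMap_eq] using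
      map_dvd (aeval g : MvPolynomial σ R →ₐ[R] MvPolynomial σ R) (ih i)

lemma C_natCast_dvd_pderiv_pow_add (p : ℕ) (f h : MvPolynomial σ R) (k : σ) :
    C (p : R) ∣ pderiv k (f ^ p + C (p : R) * h) := by
  rw [map_add, pderiv_C_mul, pderiv_pow, ← C_eq_coe_nat, mul_assoc]
  exact dvd_add (dvd_mul_right _ _) (dvd_mul_right _ _)

lemma dvd_coeff_mul_of_C_dvd_pderiv {a : R} {f : MvPolynomial σ R} {k : σ}
    (h : C a ∣ pderiv k f) (b : σ →₀ ℕ) : a ∣ coeff b f * b k := by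
  rcases Nat.eq_zero_or_pos (b k) with hk | hk
  · simp [hk]
  · have hle : Finsupp.single k 1 ≤ b := Finsupp.single_le_iff.mpr hk
    have hdvd := (C_dvd_iff_dvd_coeff _ _).mp h (b - Finsupp.single k 1)
    rw [coeff_pderiv, tsub_add_cancel_of_le hle] at hdvd
    convert hdvd using 2
    rw [Finsupp.tsub_apply, Finsupp.single_eq_same, ← Nat.cast_add_one,
      Nat.sub_add_cancel hk]

end Gradient

section FrobeniusLift

variable {n p : ℕ}

lemma C_prime_dvd_expand_sub_pow {σ : Type*} (hp : p.Prime) (f : MvPolynomial σ ℤ) :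
    C (p : ℤ) ∣ expand p f - f ^ p := by
  have := Fact.mk hp
  rw [C_dvd_iff_zmod, map_sub, map_expand, map_pow, expand_zmod, sub_self]

lemma exists_esymmSubst_eq_expand (hp : p.Prime) (f : MvPolynomial (Fin n) ℤ) :
    ∃ h, esymmSubst n ℤ (f ^ p + C (p : ℤ) * h) = expand p (esymmSubst n ℤ f) := by
  obtain ⟨h, hh⟩ := C_prime_dvd_expand_sub_pow hp (esymmSubst n ℤ f)
  have hsymm : (C (p : ℤ) * h).IsSymmetric := by
    rw [← hh, ← map_pow]
    exact (isSymmetric_expand_s8 (isSymmetric_esymmSubst f) p).sub (isSymmetric_esymmSubst _)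
  obtain ⟨h', rfl⟩ :=
    exists_esymmSubst_eq (isSymmetric_of_C_mul (Nat.cast_ne_zero.mpr hp.ne_zero) hsymm)
  exact ⟨h', by rw [map_add, map_pow, map_mul, esymmSubst_C, ← hh, add_sub_cancel]⟩

lemma exists_frobenius_lift (n : ℕ) (hp : p.Prime) :
    ∃ g : Fin n → MvPolynomial (Fin n) ℤ,
      (∀ f, esymmSubst n ℤ (aeval g f) = expand p (esymmSubst n ℤ f)) ∧
      ∀ i k, C (p : ℤ) ∣ pderiv k (g i) := by
  choose h hh using fun i : Fin n => exists_esymmSubst_eq_expand hp (X i)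
  refine ⟨fun i => X i ^ p + C (p : ℤ) * h i, fun f => ?_,
    fun i => C_natCast_dvd_pderiv_pow_add p (X i) (h i)⟩
  have hcomp : (esymmSubst n ℤ).comp (aeval fun i => X i ^ p + C (p : ℤ) * h i) =
      (expand p).comp (esymmSubst n ℤ) :=
    algHom_ext fun i => by simpa only [AlgHom.comp_apply, aeval_X] using hh i
  exact DFunLike.congr_fun hcomp f

lemma expand_pow_eq_iterate {σ R : Type*} [CommSemiring R] (q t : ℕ) (f : MvPolynomial σ R) :
    expand (q ^ t) f = (expand q)^[t] f := by
  induction t with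
  | zero => simp
  | succ t ih => rw [pow_succ', expand_mul, ih, Function.iterate_succ_apply']

lemma C_pow_dvd_pderiv_of_esymmSubst_eq_expand (hp : p.Prime) {t : ℕ}
    {f g : MvPolynomial (Fin n) ℤ}
    (h : esymmSubst n ℤ g = expand (p ^ t) (esymmSubst n ℤ f)) (k : Fin n) :
    C ((p : ℤ) ^ t) ∣ pderiv k g := by
  obtain ⟨φ, hφ, hdvd⟩ := exists_frobenius_lift n hp
  have hg : g = (aeval φ : MvPolynomial (Fin n) ℤ →ₐ[ℤ] _)^[t] f := by
    apply esymmSubst_injective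
    rw [h, expand_pow_eq_iterate]
    exact (Function.Semiconj.iterate_right (gb := expand p) hφ t f).symm
  rw [hg]
  exact C_pow_dvd_pderiv_iterate_aeval hdvd t f k

end FrobeniusLift

/-! ### Exponent vectors and monomial symmetric polynomials -/

section ExponentVectors

variable {m : ℕ}

lemma expOf_apply (μ : Multiset ℕ) (i : Fin m) : expOf m μ i = μ.count ((i : ℕ) + 1) := rfl

lemma expOf_zero : expOf m 0 = 0 := by
  ext i
  simp [expOf_apply]

lemma expOf_add (μ ν : Multiset ℕ) : expOf m (μ + ν) = expOf m μ + expOf m ν := by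
  ext i
  simp [expOf_apply]

lemma expOf_singleton_zero : expOf m {0} = 0 := by
  ext i
  simp [expOf_apply]

lemma expOf_singleton_succ (k : Fin m) : expOf m {(k : ℕ) + 1} = Finsupp.single k 1 := by
  ext i
  simp [expOf_apply, Multiset.count_singleton, Finsupp.single_apply, Fin.ext_iff, eq_comm]

lemma expOf_injOn : Set.InjOn (expOf m) {μ | ∀ a ∈ μ, 0 < a ∧ a ≤ m} := by
  intro μ hμ ν hν h
  ext a
  by_cases ha : 0 < a ∧ a ≤ m
  · have hcount := DFunLike.congr_fun h ⟨a - 1, by omega⟩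
    rwa [expOf_apply, expOf_apply, Nat.sub_add_cancel ha.1] at hcount
  · rw [Multiset.count_eq_zero_of_notMem fun h => ha (hμ a h),
      Multiset.count_eq_zero_of_notMem fun h => ha (hν a h)]

lemma exists_expOf_eq (α : Fin m →₀ ℕ) :
    ∃ μ : Multiset ℕ, (∀ a ∈ μ, 0 < a ∧ a ≤ m) ∧ expOf m μ = α := by
  refine ⟨(Finsupp.toMultiset α).map fun i : Fin m => (i : ℕ) + 1, ?_, ?_⟩
  · simp only [Multiset.mem_map]
    rintro _ ⟨i, -, rfl⟩
    exact ⟨Nat.succ_pos i, i.isLt⟩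
  · ext i
    have hinj : Function.Injective fun i : Fin m => (i : ℕ) + 1 :=
      (add_left_injective 1).comp Fin.val_injective
    rw [expOf_apply, Multiset.count_map_eq_count' _ _ hinj, Finsupp.count_toMultiset]

variable {σ : Type*} [Fintype σ]

/-- The partition formed by the nonzero entries of an exponent vector, so that `m_μ` is the sum of
the monomials `x^b` with `nonzeroValues b = μ`. -/
def nonzeroValues (b : σ → ℕ) : Multiset ℕ :=
  (Finset.univ.val.map b).filter (· ≠ 0)

lemma mem_nonzeroValues {b : σ → ℕ} {a : ℕ} :
    a ∈ nonzeroValues b ↔ (∃ i, b i = a) ∧ a ≠ 0 := by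
  simp [nonzeroValues]

lemma nonzeroValues_comp_equiv (b : σ → ℕ) (e : Equiv.Perm σ) :
    nonzeroValues (b ∘ e) = nonzeroValues b := by
  rw [nonzeroValues, ← Multiset.map_map, Multiset.map_univ_val_equiv, nonzeroValues]

lemma nonzeroValues_const_mul {q : ℕ} (hq : q ≠ 0) (b : σ → ℕ) :
    nonzeroValues (fun i => q * b i) = (nonzeroValues b).map (q * ·) := by
  simp [nonzeroValues, Multiset.filter_map, Multiset.map_map, hq]

lemma sum_expOf_singleton (b : σ → ℕ) : ∑ i, expOf m {b i} = expOf m (nonzeroValues b) := by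
  have hsum : ∑ i, expOf m {b i} = expOf m (Finset.univ.val.map b) := by
    let expOfHom : Multiset ℕ →+ Fin m →₀ ℕ := ⟨⟨expOf m, expOf_zero⟩, expOf_add⟩
    change ∑ i, expOfHom {b i} = expOfHom _
    rw [← map_sum, Finset.sum, ← Multiset.sum_map_singleton (Finset.univ.val.map b),
      Multiset.map_map]
    rfl
  rw [hsum]
  ext i
  rw [expOf_apply, expOf_apply, nonzeroValues, Multiset.count_filter_of_pos (by simp)]

end ExponentVectors

section MonomialSymmetric

variable {n : ℕ} {R : Type} [CommSemiring R]

lemma coeff_sum_monomial_of_le {σ S : Type*} [Fintype σ] [DecidableEq σ] [CommSemiring S] {N : ℕ}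
    (c : (σ → ℕ) → S) (b : σ →₀ ℕ) (hb : c b ≠ 0 → ∀ i, b i ≤ N) :
    coeff b (∑ d : σ → Fin (N + 1), monomial (Finsupp.equivFunOnFinite.symm fun i => (d i : ℕ))
      (c fun i => d i)) = c b := by
  have hiff (d : σ → Fin (N + 1)) :
      Finsupp.equivFunOnFinite.symm (fun i => (d i : ℕ)) = b ↔ ∀ i, (d i : ℕ) = b i :=
    DFunLike.ext_iff
  simp only [coeff_sum, coeff_monomial, hiff]
  by_cases hbN : ∀ i, b i ≤ N
  · rw [Finset.sum_eq_single fun i => ⟨b i, Nat.lt_succ_of_le (hbN i)⟩]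
    · simp
    · exact fun d _ hd => if_neg fun h => hd (funext fun i => Fin.ext (h i))
    · simp
  · rw [not_not.mp (mt hb hbN)]
    refine Finset.sum_eq_zero fun d _ => if_neg fun h => hbN fun i => ?_
    exact h i ▸ Nat.le_of_lt_succ (d i).isLt

lemma coeff_msymmM (μ : Multiset ℕ) (b : Fin n →₀ ℕ) :
    coeff b (msymmM n R μ) = if nonzeroValues b = μ then 1 else 0 := by
  rw [← coeff_sum_monomial_of_le (N := μ.sum) (fun b => if nonzeroValues b = μ then (1 : R) else 0)]
  · refine congrArg (coeff b) (Finset.sum_congr rfl fun d _ => ?_)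
    rw [apply_ite (monomial _), map_zero]
    rfl
  · intro h i
    obtain rfl : nonzeroValues b = μ := of_not_not fun hne => h (if_neg hne)
    by_cases hi : b i = 0
    · simp [hi]
    · exact Multiset.le_sum_of_mem (mem_nonzeroValues.mpr ⟨⟨i, rfl⟩, hi⟩)

lemma isSymmetric_msymmM (μ : Multiset ℕ) : (msymmM n R μ).IsSymmetric := by
  intro e
  ext b
  obtain ⟨c, rfl⟩ : ∃ c, Finsupp.mapDomain e c = b := (Finsupp.mapDomain_surjective e.surjective) b
  have hc : nonzeroValues (Finsupp.mapDomain e c) = nonzeroValues c := by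
    rw [← nonzeroValues_comp_equiv _ e]
    exact congrArg nonzeroValues (funext (Finsupp.mapDomain_apply e.injective c))
  rw [coeff_rename_mapDomain e e.injective, coeff_msymmM, coeff_msymmM, hc]

lemma msymmM_map_mul {q : ℕ} (hq : q ≠ 0) (μ : Multiset ℕ) :
    msymmM n R (μ.map (q * ·)) = expand q (msymmM n R μ) := by
  ext b
  by_cases hb : ∀ i, q ∣ b i
  · obtain ⟨c, rfl⟩ : ∃ c : Fin n →₀ ℕ, b = q • c := by
      choose c hc using hb
      exact ⟨Finsupp.equivFunOnFinite.symm c, Finsupp.ext hc⟩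
    have hinj : Function.Injective (q * · : ℕ → ℕ) := mul_right_injective₀ hq
    have hc : nonzeroValues (q • c : Fin n →₀ ℕ) = (nonzeroValues c).map (q * ·) :=
      nonzeroValues_const_mul hq c
    simp only [coeff_expand_smul _ hq, coeff_msymmM, hc, (Multiset.map_injective hinj).eq_iff]
  · obtain ⟨i, hi⟩ := not_forall.mp hb
    rw [coeff_expand_of_not_dvd _ hi, coeff_msymmM, if_neg]
    intro h
    have hmem : b i ∈ nonzeroValues b :=
      mem_nonzeroValues.mpr ⟨⟨i, rfl⟩, fun h0 => hi (h0 ▸ dvd_zero q)⟩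
    obtain ⟨a, -, ha⟩ := Multiset.mem_map.mp (h ▸ hmem)
    exact hi (Dvd.intro a ha)

end MonomialSymmetric

/-! ### The dual Cauchy kernel -/

section CommAlgEquiv

variable {σ τ R : Type*} [CommSemiring R]

lemma commAlgEquiv_map_C (f : MvPolynomial σ R) : commAlgEquiv R σ τ (map C f) = C f := by
  rw [← commAlgEquiv_C]
  exact (commAlgEquiv R τ σ).symm_apply_apply (C f)

lemma coeff_coeff_commAlgEquiv (G : MvPolynomial σ (MvPolynomial τ R)) (α : τ →₀ ℕ)
    (β : σ →₀ ℕ) : coeff β (coeff α (commAlgEquiv R σ τ G)) = coeff α (coeff β G) := by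
  induction G using MvPolynomial.induction_on' with
  | add F G hF hG => simp [hF, hG]
  | monomial u a =>
    induction a using MvPolynomial.induction_on' with
    | add a b ha hb => simp [ha, hb]
    | monomial v c =>
      have hswap : commAlgEquiv R σ τ (monomial u (monomial v c)) = monomial v (monomial u c) :=
        AddMonoidAlgebra.commAlgEquiv_single_single ..
      rw [hswap]
      simp only [coeff_monomial]
      split_ifs <;> simp_all [coeff_monomial]

lemma commAlgEquiv_aeval_map_aeval {σ' τ' : Type*} (a : σ → MvPolynomial σ' R)
    (b : τ → MvPolynomial τ' R) (G : MvPolynomial σ (MvPolynomial τ R)) :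
    commAlgEquiv R σ' τ' (aeval (fun i => map (C : R →+* MvPolynomial τ' R) (a i))
        (map (aeval b : MvPolynomial τ R →ₐ[R] _).toRingHom G)) =
      aeval (fun j => map (C : R →+* MvPolynomial σ' R) (b j))
        (map (aeval a : MvPolynomial σ R →ₐ[R] _).toRingHom (commAlgEquiv R σ τ G)) := by
  induction G using MvPolynomial.induction_on with
  | C f =>
    have hcomp : (aeval a : MvPolynomial σ R →ₐ[R] MvPolynomial σ' R).toRingHom.comp C = C :=
      (aeval a).comp_algebraMap
    rw [commAlgEquiv_C, map_map, hcomp, map_C, aeval_C, algebraMap_eq, commAlgEquiv_C]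
    exact map_bind₁ C b f
  | add F G hF hG => simp only [map_add, hF, hG]
  | mul_X G i hG =>
    simp only [map_mul, hG]
    simp [commAlgEquiv_map_C]

end CommAlgEquiv

section DualCauchy

variable {m n : ℕ} {R : Type} [CommRing R]

/-- The polynomial `∏_i (1 + ∑_k x_i^k Y_k)` in `Y_1, …, Y_m` over `R[x_1, …, x_n]`, which becomes
`∏_{i,j} (1 + x_i y_j)` when `Y_k` is specialized to `e_k(y)`. The exponent vector `expOf m {k}` is
that of `Y_k`, with the convention `Y_0 = 1`. -/
noncomputable def dualCauchyKernel (n m : ℕ) (R : Type) [CommRing R] :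
    MvPolynomial (Fin m) (MvPolynomial (Fin n) R) :=
  ∏ i : Fin n, ∑ k : Fin (m + 1), monomial (expOf m {(k : ℕ)}) (X i ^ (k : ℕ))

lemma esymmSubst_monomial_expOf_singleton {S : Type*} [CommRing S] (k : Fin (m + 1)) (a : S) :
    esymmSubst m S (monomial (expOf m {(k : ℕ)}) a) = C a * esymm (Fin m) S k := by
  induction k using Fin.cases with
  | zero => rw [Fin.val_zero, expOf_singleton_zero, esymm_zero, mul_one, ← C_apply, esymmSubst_C]
  | succ k =>
    rw [Fin.val_succ, expOf_singleton_succ, ← mul_one a, ← C_mul_monomial, map_mul, esymmSubst_C,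
      ← X, esymmSubst_X, mul_one]

lemma prod_one_add_C_mul_X {σ S : Type*} [Fintype σ] [CommSemiring S] (a : S) :
    ∏ j : σ, (1 + C a * X j) =
      ∑ k ∈ Finset.range (Fintype.card σ + 1), C (a ^ k) * esymm σ S k := by
  rw [Finset.prod_one_add, Finset.sum_powerset, Finset.card_univ]
  refine Finset.sum_congr rfl fun k _ => ?_
  rw [esymm, Finset.mul_sum]
  refine Finset.sum_congr rfl fun s hs => ?_
  rw [Finset.prod_mul_distrib, Finset.prod_const, (Finset.mem_powersetCard.mp hs).2, C_pow]

lemma esymmSubst_dualCauchyKernel :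
    esymmSubst m _ (dualCauchyKernel n m R) = ∏ i : Fin n, ∏ j : Fin m, (1 + C (X i) * X j) := by
  simp only [dualCauchyKernel, map_prod, map_sum, esymmSubst_monomial_expOf_singleton,
    prod_one_add_C_mul_X, Fintype.card_fin, Finset.sum_range]

lemma dualCauchyKernel_eq_sum :
    dualCauchyKernel n m R = ∑ d : Fin n → Fin (m + 1),
      monomial (expOf m (nonzeroValues fun i => (d i : ℕ)))
        (monomial (Finsupp.equivFunOnFinite.symm fun i => (d i : ℕ)) (1 : R)) := by
  rw [dualCauchyKernel, Finset.prod_univ_sum, Fintype.piFinset_univ]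
  refine Finset.sum_congr rfl fun d _ => ?_
  rw [← monomial_sum_prod, sum_expOf_singleton]
  congr 1
  rw [monomial_eq, C_1, one_mul, Finsupp.prod_fintype _ _ fun i => pow_zero (X i)]
  rfl

lemma coeff_dualCauchyKernel {μ : Multiset ℕ} (hμ : ∀ a ∈ μ, 0 < a ∧ a ≤ m) :
    coeff (expOf m μ) (dualCauchyKernel n m R) = msymmM n R μ := by
  have hiff (d : Fin n → Fin (m + 1)) :
      expOf m (nonzeroValues fun i => (d i : ℕ)) = expOf m μ ↔
        nonzeroValues (fun i => (d i : ℕ)) = μ := by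
    refine expOf_injOn.eq_iff (fun a ha => ?_) hμ
    obtain ⟨⟨i, rfl⟩, h0⟩ := mem_nonzeroValues.mp ha
    exact ⟨Nat.pos_of_ne_zero h0, Nat.le_of_lt_succ (d i).isLt⟩
  ext b
  rw [coeff_msymmM,
    ← coeff_sum_monomial_of_le (N := m) (fun b => if nonzeroValues b = μ then (1 : R) else 0)]
  · simp only [dualCauchyKernel_eq_sum, coeff_sum, coeff_monomial, hiff, apply_ite (coeff b),
      apply_ite (monomial _), map_zero, coeff_zero]
  · intro h i
    obtain rfl : nonzeroValues b = μ := of_not_not fun hne => h (if_neg hne)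
    by_cases hi : b i = 0
    · simp [hi]
    · exact (hμ _ (mem_nonzeroValues.mpr ⟨⟨i, rfl⟩, hi⟩)).2

lemma exists_map_esymmSubst_eq_dualCauchyKernel (n m : ℕ) (R : Type) [CommRing R] :
    ∃ G, map (esymmSubst n R).toRingHom G = dualCauchyKernel n m R := by
  refine mem_range_map_iff_coeffs_subset.mpr fun c hc => ?_
  obtain ⟨α, -, rfl⟩ := mem_coeffs_iff.mp hc
  obtain ⟨μ, hμ, rfl⟩ := exists_expOf_eq α
  rw [coeff_dualCauchyKernel hμ]
  exact exists_esymmSubst_eq (isSymmetric_msymmM μ)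

lemma commAlgEquiv_esymmSubst_map_esymmSubst (G : MvPolynomial (Fin m) (MvPolynomial (Fin n) R)) :
    commAlgEquiv R (Fin m) (Fin n) (esymmSubst m _ (map (esymmSubst n R).toRingHom G)) =
      esymmSubst n _ (map (esymmSubst m R).toRingHom (commAlgEquiv R (Fin m) (Fin n) G)) := by
  simpa only [esymmSubst, map_esymm] using commAlgEquiv_aeval_map_aeval
    (fun i : Fin m => esymm (Fin m) R (i + 1)) (fun j : Fin n => esymm (Fin n) R (j + 1)) G

lemma map_esymmSubst_commAlgEquiv {G : MvPolynomial (Fin m) (MvPolynomial (Fin n) R)}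
    (hG : map (esymmSubst n R).toRingHom G = dualCauchyKernel n m R) :
    map (esymmSubst m R).toRingHom (commAlgEquiv R (Fin m) (Fin n) G) =
      dualCauchyKernel m n R := by
  apply esymmSubst_injective
  rw [← commAlgEquiv_esymmSubst_map_esymmSubst, hG, esymmSubst_dualCauchyKernel,
    esymmSubst_dualCauchyKernel, Finset.prod_comm]
  simp only [map_prod, map_add, map_mul, map_one, commAlgEquiv_C_X, commAlgEquiv_X, mul_comm]

lemma coeff_eq_of_map_esymmSubst {G : MvPolynomial (Fin m) (MvPolynomial (Fin n) R)}
    (hG : map (esymmSubst n R).toRingHom G = dualCauchyKernel n m R) {μ : Multiset ℕ}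
    (hμ : ∀ a ∈ μ, 0 < a ∧ a ≤ m) {f : MvPolynomial (Fin n) R}
    (hf : esymmSubst n R f = msymmM n R μ) : coeff (expOf m μ) G = f := by
  apply esymmSubst_injective
  rw [hf, ← coeff_dualCauchyKernel hμ, ← hG, coeff_map]
  rfl

lemma coeff_expOf_comm {lam μ : Multiset ℕ} (hlam : ∀ a ∈ lam, 0 < a ∧ a ≤ n)
    (hμ : ∀ a ∈ μ, 0 < a ∧ a ≤ m) {f : MvPolynomial (Fin n) R} {g : MvPolynomial (Fin m) R}
    (hf : esymmSubst n R f = msymmM n R μ) (hg : esymmSubst m R g = msymmM m R lam) :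
    coeff (expOf n lam) f = coeff (expOf m μ) g := by
  obtain ⟨G, hG⟩ := exists_map_esymmSubst_eq_dualCauchyKernel n m R
  rw [← coeff_eq_of_map_esymmSubst hG hμ hf,
    ← coeff_eq_of_map_esymmSubst (map_esymmSubst_commAlgEquiv hG) hlam hg,
    coeff_coeff_commAlgEquiv]

end DualCauchy

/-! ### Divisibility -/

lemma pow_dvd_of_pow_add_dvd_mul {α : Type*} [CommMonoidWithZero α] [IsCancelMulZero α] {p a c : α}
    (hp : Prime p) {j s : ℕ} (ha : ¬ p ^ (j + 1) ∣ a) (h : p ^ (j + s) ∣ c * a) : p ^ s ∣ c := by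
  have ha' : emultiplicity p a ≤ j :=
    ENat.lt_natCast_add_one_iff.mp (by exact_mod_cast emultiplicity_lt_iff_not_dvd.mpr ha)
  rw [pow_dvd_iff_le_emultiplicity, emultiplicity_mul hp, Nat.cast_add, add_comm] at h
  rw [pow_dvd_iff_le_emultiplicity]
  exact (ENat.add_le_add_iff_right (ENat.natCast_ne_top j)).mp (h.trans (by gcongr))

lemma pow_dvd_coeff_mul_count {m p t : ℕ} (hp : p.Prime) {lam' μ : Multiset ℕ} {a : ℕ}
    (ha : 0 < a ∧ a ≤ m) {g : MvPolynomial (Fin m) ℤ}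
    (hg : esymmSubst m ℤ g = msymmM m ℤ (lam'.map (p ^ t * ·))) :
    (p : ℤ) ^ t ∣ coeff (expOf m μ) g * μ.count a := by
  obtain ⟨f, hf⟩ := exists_esymmSubst_eq (isSymmetric_msymmM (n := m) (R := ℤ) lam')
  rw [msymmM_map_mul (pow_ne_zero t hp.ne_zero), ← hf] at hg
  have hdvd := dvd_coeff_mul_of_C_dvd_pderiv
    (C_pow_dvd_pderiv_of_esymmSubst_eq_expand hp hg ⟨a - 1, by omega⟩) (expOf m μ)
  rwa [expOf_apply, Nat.sub_add_cancel ha.1] at hdvd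

theorem stmt8_general (p : ℕ) (hp : p.Prime) (j s : ℕ)
    (lam' : Multiset ℕ) (hpos : ∀ i ∈ lam', 0 < i)
    (μ : Multiset ℕ) (hμpos : ∀ i ∈ μ, 0 < i)
    (hμ : ¬ ∃ μ' : Multiset ℕ, μ = p ^ (j + 1) • μ')
    (n : ℕ) (hlamle : ∀ i ∈ lam', p ^ (j + s) * i ≤ n)
    (ψ : MvPolynomial (Fin n) ℤ)
    (hψ : aeval (fun i : Fin n => esymm (Fin n) ℤ ((i : ℕ) + 1)) ψ = msymmM n ℤ μ) :
    (p : ℤ) ^ s ∣ ψ.coeff (expOf n (lam'.map fun i => p ^ (j + s) * i)) := by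
  have hlam : ∀ a ∈ lam'.map (p ^ (j + s) * ·), 0 < a ∧ a ≤ n := by
    intro a ha
    obtain ⟨i, hi, rfl⟩ := Multiset.mem_map.mp ha
    exact ⟨Nat.mul_pos (pow_pos hp.pos _) (hpos i hi), hlamle i hi⟩
  have hμle : ∀ a ∈ μ, 0 < a ∧ a ≤ μ.sum := fun a ha => ⟨hμpos a ha, Multiset.le_sum_of_mem ha⟩
  obtain ⟨g, hg⟩ := exists_esymmSubst_eq
    (isSymmetric_msymmM (n := μ.sum) (R := ℤ) (lam'.map (p ^ (j + s) * ·)))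
  obtain ⟨a, ha, hcount⟩ : ∃ a ∈ μ, ¬ p ^ (j + 1) ∣ μ.count a := by
    by_contra! hall
    exact hμ (Multiset.exists_smul_of_dvd_count μ hall)
  rw [coeff_expOf_comm hlam hμle hψ hg]
  exact pow_dvd_of_pow_add_dvd_mul (Nat.prime_iff_prime_int.mp hp) (by exact_mod_cast hcount)
    (pow_dvd_coeff_mul_count hp (hμle a ha) hg)

theorem stmt8 (p : ℕ) (hp : p.Prime) (t j : ℕ) (hjt : j ≤ t)
    (w' : ℕ) (hw' : 1 ≤ w')
    -- `λ'` is a partition of `w'` and `λ = p^t·λ'`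
    (lam' : Multiset ℕ) (hpos : ∀ i ∈ lam', 0 < i) (hsum : lam'.sum = w')
    -- `μ` is a partition of `w = w'·p^t` which is not of the form `p^(j+1) * μ'`
    (μ : Multiset ℕ) (hμpos : ∀ i ∈ μ, 0 < i) (hμsum : μ.sum = w' * p ^ t)
    (hμ : ¬ ∃ μ' : Multiset ℕ, μ = p ^ (j + 1) • μ')
    (n : ℕ) (hn : w' * p ^ t ≤ n) (hμcard : Multiset.card μ ≤ n)
    (hlamle : ∀ i ∈ lam', p ^ t * i ≤ n)
    -- `ψ` is the unique polynomial with `m_μ = ψ(e_1,…,e_n)`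
    (ψ : MvPolynomial (Fin n) ℤ)
    (hψ : MvPolynomial.aeval (fun i : Fin n => MvPolynomial.esymm (Fin n) ℤ ((i : ℕ) + 1)) ψ =
      msymmM n ℤ μ) :
    -- `p^(t-j)` divides `d_{λμ}`, the coefficient of `X_{λ₁}⋯X_{λₖ}` in `ψ`
    (p : ℤ) ^ (t - j) ∣ ψ.coeff (expOf n (lam'.map fun i => p ^ t * i)) := by
  obtain ⟨s, rfl⟩ := Nat.exists_eq_add_of_le hjt
  simpa only [Nat.add_sub_cancel_left] using
    stmt8_general p hp j s lam' hpos μ hμpos hμ n hlamle ψ hψ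
end

section
/- Let 1 ≤ h ≤ n and set j = v̄_p(h). Then v_L(c_h) ≥ i_j^{π_L} + h, with equality if and only if either i_j^{π_L} = ∞ (so that both sides are ∞), or i_j^{π_L} < ∞ and h = b_j. -/
open scoped Classical

/-- `cCoef K L πL n h` is `c_h`, where the minimal polynomial of the uniformizer `πL` is
`X^n - c₁X^{n-1} + ⋯ + (-1)^{n-1}c_{n-1}X + (-1)^n c_n`. -/
noncomputable def cCoef (K L : Type) [Field K] [Field L] [Algebra K L]
    (πL : L) (n h : ℕ) : K :=
  (-1) ^ h * (minpoly K πL).coeff (n - h)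

/-- The valuation of `x`, with value `⊤` at `x = 0`. -/
noncomputable def vext (L : Type) [Field L] (vL : L → ℤ) (x : L) : WithTop ℤ :=
  if x = 0 then ⊤ else (vL x : WithTop ℤ)

/-- `iPi p ν n K vK c j` is `i_j^{π_L} = min{ n·v_K(c_h) - h : 1 ≤ h ≤ n, v̄_p(h) ≤ j }`,
an element of `ℤ_{≥0} ∪ {∞}`. -/
noncomputable def iPi (p ν n : ℕ) (K : Type) [Field K] (vK : K → ℤ) (c : ℕ → K)
    (j : ℕ) : WithTop ℤ :=
  ((Finset.Icc 1 n).filter fun h => min (padicValNat p h) ν ≤ j).inf fun h =>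
    if c h = 0 then ⊤ else (((n : ℤ) * vK (c h) - (h : ℤ) : ℤ) : WithTop ℤ)

/-!
Each finite term `n * v_K(c_k) - k` of the minimum `i_j` is congruent to `-k` modulo `n`, so it
remembers its index `k ∈ [1, n]`. Hence a finite `i_j = a * n - b` with `b ∈ [1, n]` is attained at
the index `b` and nowhere else. Since `v_L = n * v_K` on `K`, the number `v_L(c_h) - h` is the term
of index `h`: it is at least `i_j`, and a finite `i_j` equals it exactly when `h = b`.
-/

theorem eq_and_eq_of_mul_sub_eq_mul_sub {n h k : ℕ} {a d : ℤ} (h1 : 1 ≤ h) (h2 : h ≤ n)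
    (k1 : 1 ≤ k) (k2 : k ≤ n) (heq : n * d - k = n * a - h) : k = h ∧ d = a := by
  have hdvd : (n : ℤ) ∣ (k : ℤ) - h := ⟨d - a, by linarith⟩
  have hkh : (k : ℤ) - h = 0 := Int.eq_zero_of_abs_lt_dvd hdvd (by rw [abs_lt]; omega)
  have hn : (n : ℤ) ≠ 0 := by omega
  exact ⟨by omega, mul_left_cancel₀ hn (by linarith)⟩

theorem coe_sub_add_coe {α : Type*} [AddGroup α] (x y : α) :
    ((x - y : α) : WithTop α) + (y : WithTop α) = x := by
  rw [← WithTop.coe_add, sub_add_cancel]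

section Extension

variable {K L : Type} [Field K] [Field L] [Algebra K L] {n : ℕ} {vK : K → ℤ} {vL : L → ℤ}

theorem vext_zero : vext L vL 0 = ⊤ := if_pos rfl

theorem vext_algebraMap (hext : ∀ x : K, x ≠ 0 → vL (algebraMap K L x) = (n : ℤ) * vK x)
    {x : K} (hx : x ≠ 0) : vext L vL (algebraMap K L x) = ((n * vK x : ℤ) : WithTop ℤ) := by
  rw [vext, if_neg ((map_ne_zero _).2 hx), hext x hx]

end Extension

section Minimum

variable {K : Type} [Field K] {p ν n h j : ℕ} {vK : K → ℤ} {c : ℕ → K}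

theorem iPi_le (h1 : 1 ≤ h) (h2 : h ≤ n) (hj : min (padicValNat p h) ν ≤ j) (hc : c h ≠ 0) :
    iPi p ν n K vK c j ≤ ((n * vK (c h) - h : ℤ) : WithTop ℤ) := by
  have hmem : h ∈ (Finset.Icc 1 n).filter fun k => min (padicValNat p k) ν ≤ j :=
    Finset.mem_filter.2 ⟨Finset.mem_Icc.2 ⟨h1, h2⟩, hj⟩
  rw [iPi]
  exact (Finset.inf_le hmem).trans_eq (if_neg hc)

theorem exists_of_iPi_eq_coe {m : ℤ} (hm : iPi p ν n K vK c j = m) :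
    ∃ k, 1 ≤ k ∧ k ≤ n ∧ c k ≠ 0 ∧ n * vK (c k) - k = m := by
  rw [iPi] at hm
  have hne : ((Finset.Icc 1 n).filter fun k => min (padicValNat p k) ν ≤ j).Nonempty := by
    by_contra hempty
    rw [Finset.not_nonempty_iff_eq_empty.1 hempty, Finset.inf_empty] at hm
    exact WithTop.top_ne_coe hm
  obtain ⟨k, hk, hattained⟩ := Finset.exists_mem_eq_inf _ hne fun k =>
    if c k = 0 then ⊤ else ((n * vK (c k) - k : ℤ) : WithTop ℤ)
  obtain ⟨hk1, hk2⟩ := Finset.mem_Icc.1 (Finset.mem_filter.1 hk).1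
  rw [hattained] at hm
  split_ifs at hm with hck
  · exact absurd hm WithTop.top_ne_coe
  · exact ⟨k, hk1, hk2, hck, WithTop.coe_inj.1 hm⟩

theorem ne_zero_and_eq_of_iPi_eq_mul_sub {a : ℤ} (h1 : 1 ≤ h) (h2 : h ≤ n)
    (hi : iPi p ν n K vK c j = ((a * n - h : ℤ) : WithTop ℤ)) : c h ≠ 0 ∧ vK (c h) = a := by
  obtain ⟨k, k1, k2, hck, hk⟩ := exists_of_iPi_eq_coe hi
  obtain ⟨rfl, ha⟩ := eq_and_eq_of_mul_sub_eq_mul_sub h1 h2 k1 k2 (hk.trans (by rw [mul_comm]))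
  exact ⟨hck, ha⟩

end Minimum

section Comparison

variable {K L : Type} [Field K] [Field L] [Algebra K L] {p ν n h j : ℕ} {vK : K → ℤ} {vL : L → ℤ}
  {c : ℕ → K}

theorem iPi_add_le_vext (hext : ∀ x : K, x ≠ 0 → vL (algebraMap K L x) = (n : ℤ) * vK x)
    (h1 : 1 ≤ h) (h2 : h ≤ n) (hj : min (padicValNat p h) ν ≤ j) :
    iPi p ν n K vK c j + ((h : ℤ) : WithTop ℤ) ≤ vext L vL (algebraMap K L (c h)) := by
  by_cases hc : c h = 0
  · rw [hc, map_zero, vext_zero]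
    exact le_top
  · calc iPi p ν n K vK c j + ((h : ℤ) : WithTop ℤ)
        ≤ ((n * vK (c h) - h : ℤ) : WithTop ℤ) + ((h : ℤ) : WithTop ℤ) := by
          gcongr
          exact iPi_le h1 h2 hj hc
      _ = vext L vL (algebraMap K L (c h)) := by rw [coe_sub_add_coe, vext_algebraMap hext hc]

theorem iPi_eq_top_or_eq_mul_sub_of_add_eq_vext
    (hext : ∀ x : K, x ≠ 0 → vL (algebraMap K L x) = (n : ℤ) * vK x)
    (heq : iPi p ν n K vK c j + ((h : ℤ) : WithTop ℤ) = vext L vL (algebraMap K L (c h))) :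
    iPi p ν n K vK c j = ⊤ ∨
      ∃ a : ℤ, iPi p ν n K vK c j = ((a * n - h : ℤ) : WithTop ℤ) := by
  by_cases hc : c h = 0
  · rw [hc, map_zero, vext_zero] at heq
    exact .inl ((WithTop.add_eq_top.1 heq).resolve_right WithTop.coe_ne_top)
  · rw [vext_algebraMap hext hc, ← coe_sub_add_coe (n * vK (c h)) (h : ℤ),
      WithTop.add_right_inj WithTop.coe_ne_top] at heq
    exact .inr ⟨vK (c h), by rw [heq, mul_comm]⟩

theorem iPi_add_eq_vext_of_eq_mul_sub
    (hext : ∀ x : K, x ≠ 0 → vL (algebraMap K L x) = (n : ℤ) * vK x)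
    (h1 : 1 ≤ h) (h2 : h ≤ n) {a : ℤ}
    (hi : iPi p ν n K vK c j = ((a * n - h : ℤ) : WithTop ℤ)) :
    iPi p ν n K vK c j + ((h : ℤ) : WithTop ℤ) = vext L vL (algebraMap K L (c h)) := by
  obtain ⟨hc, rfl⟩ := ne_zero_and_eq_of_iPi_eq_mul_sub h1 h2 hi
  rw [hi, coe_sub_add_coe, vext_algebraMap hext hc, mul_comm]

theorem stmt10_general (hext : ∀ x : K, x ≠ 0 → vL (algebraMap K L x) = (n : ℤ) * vK x)
    (h1 : 1 ≤ h) (h2 : h ≤ n) (hj : min (padicValNat p h) ν ≤ j) :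
    iPi p ν n K vK c j + ((h : ℤ) : WithTop ℤ) ≤ vext L vL (algebraMap K L (c h)) ∧
      (iPi p ν n K vK c j + ((h : ℤ) : WithTop ℤ) = vext L vL (algebraMap K L (c h)) ↔
        (iPi p ν n K vK c j = ⊤ ∨
          ∃ a b : ℤ, 1 ≤ b ∧ b ≤ (n : ℤ) ∧
            iPi p ν n K vK c j = ((a * (n : ℤ) - b : ℤ) : WithTop ℤ) ∧ (h : ℤ) = b)) := by
  have hle : iPi p ν n K vK c j + ((h : ℤ) : WithTop ℤ) ≤ vext L vL (algebraMap K L (c h)) :=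
    iPi_add_le_vext hext h1 h2 hj
  refine ⟨hle, fun heq => ?_, ?_⟩
  · refine (iPi_eq_top_or_eq_mul_sub_of_add_eq_vext hext heq).imp_right ?_
    rintro ⟨a, hi⟩
    exact ⟨a, h, by omega, by omega, hi, rfl⟩
  · rintro (htop | ⟨a, _, -, -, hi, rfl⟩)
    · rw [htop, top_add] at hle ⊢
      exact (top_le_iff.1 hle).symm
    · exact iPi_add_eq_vext_of_eq_mul_sub hext h1 h2 hi

end Comparison

theorem stmt10
    (p : ℕ) (hp : p.Prime)
    (K L : Type) [Field K] [Field L] [Algebra K L] [FiniteDimensional K L]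
    [Algebra.IsSeparable K L]
    (n : ℕ) (hn : 0 < n) (hrank : Module.finrank K L = n)
    (vK : K → ℤ) (vL : L → ℤ)
    (hvKmul : ∀ x y : K, x ≠ 0 → y ≠ 0 → vK (x * y) = vK x + vK y)
    (hvKadd : ∀ x y : K, x ≠ 0 → y ≠ 0 → x + y ≠ 0 → min (vK x) (vK y) ≤ vK (x + y))
    (hvKsurj : ∀ m : ℤ, ∃ x : K, x ≠ 0 ∧ vK x = m)
    (hvLmul : ∀ x y : L, x ≠ 0 → y ≠ 0 → vL (x * y) = vL x + vL y)
    (hvLadd : ∀ x y : L, x ≠ 0 → y ≠ 0 → x + y ≠ 0 → min (vL x) (vL y) ≤ vL (x + y))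
    (hvLsurj : ∀ m : ℤ, ∃ x : L, x ≠ 0 ∧ vL x = m)
    (hext : ∀ x : K, x ≠ 0 → vL (algebraMap K L x) = (n : ℤ) * vK x)
    (hcomplete : ∀ s : ℕ → K,
      (∀ m : ℤ, ∃ N : ℕ, ∀ i, N ≤ i → ∀ j, N ≤ j → s i - s j = 0 ∨ m ≤ vK (s i - s j)) →
      ∃ x : K, ∀ m : ℤ, ∃ N : ℕ, ∀ i, N ≤ i → s i - x = 0 ∨ m ≤ vK (s i - x))
    (hreschar : (p : K) = 0 ∨ 1 ≤ vK (p : K))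
    (hresperf : ∀ x : K, (x = 0 ∨ 0 ≤ vK x) →
      ∃ y : K, (y = 0 ∨ 0 ≤ vK y) ∧ (x - y ^ p = 0 ∨ 1 ≤ vK (x - y ^ p)))
    (u ν : ℕ) (hu : ¬ p ∣ u) (hnu : n = u * p ^ ν)
    (πL : L) (hπ : vL πL = 1)
    (h : ℕ) (h1 : 1 ≤ h) (h2 : h ≤ n) :
    iPi p ν n K vK (cCoef K L πL n) (min (padicValNat p h) ν) + ((h : ℤ) : WithTop ℤ) ≤
        vext L vL (algebraMap K L (cCoef K L πL n h)) ∧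
      (iPi p ν n K vK (cCoef K L πL n) (min (padicValNat p h) ν) + ((h : ℤ) : WithTop ℤ) =
          vext L vL (algebraMap K L (cCoef K L πL n h)) ↔
        (iPi p ν n K vK (cCoef K L πL n) (min (padicValNat p h) ν) = ⊤ ∨
          ∃ a b : ℤ, 1 ≤ b ∧ b ≤ (n : ℤ) ∧
            iPi p ν n K vK (cCoef K L πL n) (min (padicValNat p h) ν) =
              ((a * (n : ℤ) - b : ℤ) : WithTop ℤ) ∧
            (h : ℤ) = b)) :=
  stmt10_general hext h1 h2 le_rfl
end
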